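/- arXiv:1006.4696 — 5 statements merged into one kernel-verified Lean document; each statement's English description precedes it below -/
import Mathlib

section
/- (Tightness, lowest equilibrium direction) A competitive equilibrium W of a unit-demand market is the lowest competitive equilibrium (minimal price vector) if and only if for every nonempty subset T of goods all of whose prices at W are strictly positive, the demand set D^T(W) = {i ∈ I : ∃ j ∈ T with p_i^j(u_i(W)) = p^j(u(W))} has cardinality at least |T| + 1. -/
attribute [local instance] Classical.propDecidable

/-- A unit-demand market: finite sets of buyers `I` and goods `J`, with utility
functions `u i j : ℝ → ℝ` that are continuous, strictly decreasing, surjective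
(domain and range cover all of `ℝ`), and eventually non-positive. -/
structure Market (I J : Type) [Fintype I] [Fintype J] where
  u : I → J → ℝ → ℝ
  cont : ∀ i j, Continuous (u i j)
  anti : ∀ i j, StrictAnti (u i j)
  surj : ∀ i j, Function.Surjective (u i j)
  evNonpos : ∀ i j, ∃ x : ℝ, ∀ y ≥ x, u i j y ≤ 0

/-- A competitive equilibrium: nonnegative prices `p`, nonnegative payoffs `w`,
and a partial matching `μ` (injective on matched buyers) such that every buyer
receives a most preferred good at the prices, unmatched buyers have payoff `0`,
and unmatched goods have price `0`. -/
def IsEquilib {I J : Type} [Fintype I] [Fintype J] (M : Market I J)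
    (p : J → ℝ) (w : I → ℝ) (μ : I → Option J) : Prop :=
  (∀ i i' j, μ i = some j → μ i' = some j → i = i') ∧
  (∀ j, 0 ≤ p j) ∧ (∀ i, 0 ≤ w i) ∧
  (∀ i j, μ i = some j → w i = M.u i j (p j)) ∧
  (∀ i j, M.u i j (p j) ≤ w i) ∧
  (∀ i, μ i = none → w i = 0) ∧
  (∀ j, (∀ i, μ i ≠ some j) → p j = 0)

/-- `W` is the lowest competitive equilibrium: its prices are componentwise
below those of every competitive equilibrium. -/
def IsLowest {I J : Type} [Fintype I] [Fintype J] (M : Market I J)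
    (p : J → ℝ) (w : I → ℝ) (μ : I → Option J) : Prop :=
  IsEquilib M p w μ ∧ ∀ p' w' μ', IsEquilib M p' w' μ' → ∀ j, p j ≤ p' j

/-- `W` is the highest competitive equilibrium: its prices are componentwise
above those of every competitive equilibrium. -/
def IsHighest {I J : Type} [Fintype I] [Fintype J] (M : Market I J)
    (p : J → ℝ) (w : I → ℝ) (μ : I → Option J) : Prop :=
  IsEquilib M p w μ ∧ ∀ p' w' μ', IsEquilib M p' w' μ' → ∀ j, p' j ≤ p j

/-- Induced payoff `u_i(p) = max({u_i^j(p^j) : j} ∪ {0})`. -/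
noncomputable def inducedPayoff {I J : Type} [Fintype I] [Fintype J] (M : Market I J)
    (p : J → ℝ) (i : I) : ℝ :=
  (insert (0:ℝ) (Finset.univ.image fun j => M.u i j (p j))).max' (Finset.insert_nonempty _ _)

/-- Induced price `p^j(u) = max({p_i^j(u_i) : i} ∪ {0})`, where `p_i^j` is the
inverse of `u_i^j`. -/
noncomputable def inducedPrice {I J : Type} [Fintype I] [Fintype J] (M : Market I J)
    (w : I → ℝ) (j : J) : ℝ :=
  (insert (0:ℝ) (Finset.univ.image fun i => Function.invFun (M.u i j) (w i))).max' (Finset.insert_nonempty _ _)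

/-- Ascending auction with increment `δ`: with as many buyers as goods there is an assignment of
all buyers which is envy-free up to `δ`, and some good is within `δ` of its reserve price. -/
theorem exists_approx_envyFree {B G : Type} [Fintype B] [Fintype G] [Nonempty G]
    (hcard : Fintype.card B = Fintype.card G) (v : B → G → ℝ → ℝ)
    (anti : ∀ i j, StrictAnti (v i j)) (surj : ∀ i j, Function.Surjective (v i j))
    (r : G → ℝ) (δ : ℝ) (hδ : 0 < δ) :
    ∃ (σ : B ≃ G) (g₀ : G) (q : G → ℝ), (∀ j, r j ≤ q j) ∧ q g₀ ≤ r g₀ + δ ∧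
      ∀ i j, v i j (q j + δ) ≤ v i (σ i) (q (σ i)) := by
  let S : (G → ℕ) → (G → Option B) → Prop := fun k m =>
    (∀ g g' b, m g = some b → m g' = some b → g = g') ∧
    (∀ g, m g = none → k g = 0) ∧
    (∀ g b, m g = some b → ∀ g', v b g' (r g' + δ * k g' + δ) ≤ v b g (r g + δ * k g)) ∧
    ∃ g, k g ≤ 1
  have hbound : ∃ N : ℕ, ∀ k m, S k m → ∑ g, k g ≤ N := by
    choose X hX using fun (x : B × G × G) => surj x.1 x.2.1 (v x.1 x.2.2 (r x.2.2 + 2 * δ))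
    obtain ⟨C, hC⟩ := (Set.finite_range X).bddAbove
    refine ⟨∑ g, ⌈(C - r g) / δ⌉₊, fun k m ⟨_, hnone, hhap, g₁, hg₁⟩ =>
      Finset.sum_le_sum fun g _ => ?_⟩
    rcases hm : m g with _ | b
    · simp [hnone g hm]
    · have h1 := hhap g b hm g₁
      have hk : (k g₁ : ℝ) ≤ 1 := by exact_mod_cast hg₁
      have h2 : v b g₁ (r g₁ + 2 * δ) ≤ v b g₁ (r g₁ + δ * k g₁ + δ) :=
        (anti b g₁).antitone (by nlinarith)
      rw [← hX (b, g, g₁)] at h2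
      have h3 := (anti b g).le_iff_ge.1 (h2.trans h1)
      have h4 : X (b, g, g₁) ≤ C := hC ⟨_, rfl⟩
      have h5 : (k g : ℝ) ≤ (C - r g) / δ := by
        rw [le_div_iff₀ hδ]
        linarith
      exact_mod_cast h5.trans (Nat.le_ceil _)
  obtain ⟨k, m, hS, hmax⟩ : ∃ k m, S k m ∧ ∀ k' m', S k' m' → ∑ g, k' g ≤ ∑ g, k g := by
    obtain ⟨N, hN⟩ := hbound
    let A : Set ℕ := {n | ∃ k m, S k m ∧ ∑ g, k g = n}
    have hne : A.Nonempty :=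
      ⟨_, fun _ => 0, fun _ => none, ⟨by simp, by simp, by simp, by simp⟩, rfl⟩
    have hbdd : BddAbove A := ⟨N, by rintro _ ⟨k, m, hS, rfl⟩; exact hN k m hS⟩
    obtain ⟨k, m, hS, hk⟩ := Nat.sSup_mem hne hbdd
    exact ⟨k, m, hS, fun k' m' h' => hk ▸ le_csSup hbdd ⟨k', m', h', rfl⟩⟩
  obtain ⟨hinj, hnone, hhap, g₀, hg₀⟩ := hS
  have hall : ∀ b, ∃ g, m g = some b := by
    by_contra! hcon
    obtain ⟨b, hb⟩ := hcon
    obtain ⟨g₁, hg₁⟩ : ∃ g, m g = none := by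
      by_contra! hsome
      choose f hf using fun g => Option.ne_none_iff_exists'.1 (hsome g)
      have hfinj : Function.Injective f := fun x y hxy =>
        hinj x y (f x) (hf x) (hxy ▸ hf y)
      obtain ⟨g, hg⟩ := ((Fintype.bijective_iff_injective_and_card f).2
        ⟨hfinj, hcard.symm⟩).surjective b
      exact hb g (hg ▸ hf g)
    obtain ⟨j, hj⟩ := Finite.exists_max fun g => v b g (r g + δ * k g + δ)
    have hkle : ∀ g, k g ≤ Function.update k j (k j + 1) g := by
      intro g
      rcases eq_or_ne g j with rfl | hg
      · simp
      · simp [hg]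
    have hvle : ∀ c g, v c g (r g + δ * (Function.update k j (k j + 1) g : ℕ) + δ)
        ≤ v c g (r g + δ * k g + δ) := by
      intro c g
      apply (anti c g).antitone
      have : (k g : ℝ) ≤ (Function.update k j (k j + 1) g : ℕ) := by exact_mod_cast hkle g
      nlinarith
    have hS' : S (Function.update k j (k j + 1)) (Function.update m j (some b)) := by
      refine ⟨?_, ?_, ?_, g₁, ?_⟩
      · intro g g' c h1 h2
        by_cases hg : g = j <;> by_cases hg' : g' = j
        · exact hg.trans hg'.symm
        · simp [hg, hg'] at h1 h2
          exact absurd (h1 ▸ h2) (hb g')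
        · simp [hg, hg'] at h1 h2
          exact absurd (h2 ▸ h1) (hb g)
        · simp [hg, hg'] at h1 h2
          exact hinj g g' c h1 h2
      · intro g h1
        rcases eq_or_ne g j with rfl | hg
        · simp at h1
        · simp [hg] at h1 ⊢
          exact hnone g h1
      · intro g c h1 g'
        refine (hvle c g').trans ?_
        rcases eq_or_ne g j with rfl | hg
        · simp at h1
          subst h1
          refine (hj g').trans (le_of_eq ?_)
          congr 1
          simp
          ring
        · simp [hg] at h1 ⊢
          exact hhap g c h1 g'
      · have := hnone g₁ hg₁
        rcases eq_or_ne g₁ j with rfl | hg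
        · simp [this]
        · simp [hg, this]
    refine absurd (hmax _ _ hS') (not_le.2 ?_)
    exact Finset.sum_lt_sum (fun g _ => hkle g) ⟨j, Finset.mem_univ _, by simp⟩
  choose f hf using hall
  have hfinj : Function.Injective f := fun x y hxy => by
    have := hf x
    rw [hxy, hf y] at this
    exact (Option.some.inj this).symm
  refine ⟨Equiv.ofBijective f ((Fintype.bijective_iff_injective_and_card f).2 ⟨hfinj, hcard⟩), g₀,
    fun g => r g + δ * k g, fun g => ?_, ?_, fun b g => hhap _ b (hf b) g⟩
  · have : 0 ≤ δ * k g := by positivity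
    linarith
  · have : (k g₀ : ℝ) ≤ 1 := by exact_mod_cast hg₀
    nlinarith

/-- With as many buyers as goods there are envy-free prices above the reserve prices `r` at which
all buyers and goods are matched and some good is priced at its reserve. -/
theorem exists_envyFree {B G : Type} [Fintype B] [Fintype G] [Nonempty G]
    (hcard : Fintype.card B = Fintype.card G) (v : B → G → ℝ → ℝ)
    (cont : ∀ i j, Continuous (v i j))
    (anti : ∀ i j, StrictAnti (v i j)) (surj : ∀ i j, Function.Surjective (v i j))
    (r : G → ℝ) :
    ∃ (σ : B ≃ G) (g₀ : G) (q : G → ℝ), (∀ j, r j ≤ q j) ∧ q g₀ = r g₀ ∧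
      ∀ i j, v i j (q j) ≤ v i (σ i) (q (σ i)) := by
  let δ : ℕ → ℝ := fun n => 1 / ((n : ℝ) + 1)
  have hδpos : ∀ n, 0 < δ n := fun n => Nat.one_div_pos_of_nat
  have hδanti : Antitone δ := fun _ _ h => Nat.one_div_le_one_div h
  have hδone : ∀ n, δ n ≤ 1 := fun n => by simpa [δ] using hδanti (Nat.zero_le n)
  have hδlim : Filter.Tendsto δ Filter.atTop (nhds 0) := tendsto_one_div_add_atTop_nhds_zero_nat
  choose X hX using fun (x : B × G × G) => surj x.1 x.2.1 (v x.1 x.2.2 (r x.2.2 + 2))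
  obtain ⟨C, hC⟩ := (Set.finite_range X).bddAbove
  let F : (B ≃ G) × G → ℕ → Set (G → ℝ) := fun c n =>
    {q | q ∈ Set.Icc r (fun _ => C) ∧ q c.2 ≤ r c.2 + δ n ∧
      ∀ i j, v i j (q j + δ n) ≤ v i (c.1 i) (q (c.1 i))}
  have hFmono : ∀ c, Antitone (F c) := by
    rintro c m n hmn q ⟨h1, h2, h3⟩
    refine ⟨h1, h2.trans (by linarith [hδanti hmn]), fun i j => le_trans ?_ (h3 i j)⟩
    exact (anti i j).antitone (by linarith [hδanti hmn])
  have hFclosed : ∀ c n, IsClosed (F c n) := by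
    intro c n
    have : F c n = Set.Icc r (fun _ => C) ∩ ({q | q c.2 ≤ r c.2 + δ n} ∩
        ⋂ i, ⋂ j, {q | v i j (q j + δ n) ≤ v i (c.1 i) (q (c.1 i))}) := by
      ext q
      simp [F]
    rw [this]
    exact isClosed_Icc.inter ((isClosed_le (by fun_prop) (by fun_prop)).inter
      (isClosed_iInter fun i => isClosed_iInter fun j =>
        isClosed_le ((cont i j).comp (by fun_prop)) ((cont i (c.1 i)).comp (by fun_prop))))
  have hF : ∀ n, ∃ c, (F c n).Nonempty := by
    intro n
    obtain ⟨σ, g₀, q, h1, h2, h3⟩ := exists_approx_envyFree hcard v anti surj r (δ n) (hδpos n)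
    refine ⟨(σ, g₀), q, ⟨h1, fun g => ?_⟩, h2, h3⟩
    obtain ⟨b, rfl⟩ := σ.surjective g
    have h4 : v b g₀ (r g₀ + 2) ≤ v b g₀ (q g₀ + δ n) :=
      (anti b g₀).antitone (by linarith [hδone n])
    rw [← hX (b, σ b, g₀)] at h4
    have h5 := (anti b (σ b)).le_iff_ge.1 (h4.trans (h3 b g₀))
    exact h5.trans (hC ⟨_, rfl⟩)
  obtain ⟨c, hc⟩ : ∃ c, ∀ n, (F c n).Nonempty := by
    by_contra! hcon
    choose N hN using hcon
    obtain ⟨n, hn⟩ := (Set.finite_range N).bddAbove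
    obtain ⟨c, q, hq⟩ := hF n
    have := hFmono c (hn ⟨c, rfl⟩ : N c ≤ n) hq
    rw [hN c] at this
    exact this
  obtain ⟨q, hq⟩ := IsCompact.nonempty_iInter_of_sequence_nonempty_isCompact_isClosed (F c)
    (fun n => hFmono c n.le_succ) hc
    (isCompact_Icc.of_isClosed_subset (hFclosed c 0) fun q hq => hq.1) (hFclosed c)
  rw [Set.mem_iInter] at hq
  refine ⟨c.1, c.2, q, (hq 0).1.1, le_antisymm ?_ ((hq 0).1.1 _), fun i j => ?_⟩
  · have : Filter.Tendsto (fun n => r c.2 + δ n) Filter.atTop (nhds (r c.2)) := by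
      simpa using hδlim.const_add (r c.2)
    exact ge_of_tendsto' this fun n => (hq n).2.1
  · have : Filter.Tendsto (fun n => v i j (q j + δ n)) Filter.atTop (nhds (v i j (q j))) := by
      refine ((cont i j).tendsto _).comp ?_
      simpa using hδlim.const_add (q j)
    exact le_of_tendsto' this fun n => (hq n).2.2 i j

section

variable {I J : Type} [Fintype I] [Fintype J] {M : Market I J}
  {p : J → ℝ} {w : I → ℝ} {μ : I → Option J}

theorem IsEquilib.exists_buyer (h : IsEquilib M p w μ) {j : J} (hj : 0 < p j) :
    ∃ i, μ i = some j := by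
  by_contra! hcon
  exact hj.ne' (h.2.2.2.2.2.2 j hcon)

theorem Market.u_invFun (M : Market I J) (i : I) (j : J) (x : ℝ) :
    M.u i j (Function.invFun (M.u i j) x) = x :=
  Function.invFun_eq (M.surj i j x)

theorem IsEquilib.invFun_le (h : IsEquilib M p w μ) (i : I) (j : J) :
    Function.invFun (M.u i j) (w i) ≤ p j := by
  rw [← (M.anti i j).le_iff_ge, M.u_invFun]
  exact h.2.2.2.2.1 i j

theorem Market.invFun_eq_iff (M : Market I J) (i : I) (j : J) (x y : ℝ) :
    Function.invFun (M.u i j) y = x ↔ y = M.u i j x := by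
  rw [← (M.anti i j).injective.eq_iff, M.u_invFun]

theorem IsEquilib.inducedPrice_eq (h : IsEquilib M p w μ) {j : J} (hj : 0 < p j) :
    inducedPrice M w j = p j := by
  apply le_antisymm
  · refine Finset.max'_le _ _ _ fun x hx => ?_
    rcases Finset.mem_insert.1 hx with rfl | hx
    · exact hj.le
    · obtain ⟨i, -, rfl⟩ := Finset.mem_image.1 hx
      exact h.invFun_le i j
  · obtain ⟨i, hi⟩ := h.exists_buyer hj
    refine Finset.le_max' _ _ (Finset.mem_insert_of_mem (Finset.mem_image.2 ⟨i, by simp, ?_⟩))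
    exact (M.invFun_eq_iff i j _ _).2 (h.2.2.2.1 i j hi)

/-- The interested buyers in a set of goods with positive prices are those whose payoff is
attained at one of these goods. -/
theorem IsEquilib.filter_interested_eq (h : IsEquilib M p w μ) {T : Finset J}
    (hT : ∀ j ∈ T, 0 < p j) :
    (Finset.univ.filter fun i : I =>
      ∃ j ∈ T, Function.invFun (M.u i j) (w i) = inducedPrice M w j) =
    Finset.univ.filter fun i : I => ∃ j ∈ T, w i = M.u i j (p j) := by
  ext i
  simp only [Finset.mem_filter, Finset.mem_univ, true_and]
  refine exists_congr fun j => and_congr_right fun hj => ?_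
  rw [h.inducedPrice_eq (hT j hj), M.invFun_eq_iff]

/-- The meet of an equilibrium with prices `Q` and payoffs `W` at which the buyers who are better
off than in the equilibrium are matched by `ν`. -/
theorem IsEquilib.meet (h : IsEquilib M p w μ) {Q : J → ℝ} {W : I → ℝ} {ν : I → J}
    (hQ : ∀ j, 0 ≤ Q j)
    (hinj : ∀ i i', w i < W i → w i' < W i' → ν i = ν i' → i = i')
    (hν : ∀ i, w i < W i → W i = M.u i (ν i) (Q (ν i)))
    (hle : ∀ i j, M.u i j (Q j) ≤ max (w i) (W i)) :
    IsEquilib M (fun j => min (p j) (Q j)) (fun i => max (w i) (W i))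
      (fun i => if w i < W i then some (ν i) else μ i) := by
  have hνA : ∀ i, w i < W i → Q (ν i) < p (ν i) := fun i hi =>
    (M.anti i (ν i)).lt_iff_gt.1 ((h.2.2.2.2.1 i (ν i)).trans_lt (hν i hi ▸ hi))
  have hμB : ∀ i j, μ i = some j → Q j < p j → w i < W i := by
    intro i j hij hj
    have h1 := hle i j
    have h2 := M.anti i j hj
    rw [← h.2.2.2.1 i j hij] at h2
    rcases le_max_iff.1 h1 with h3 | h3
    · exact absurd h2 h3.not_gt
    · exact h2.trans_le h3
  choose g hg using fun j : {j // Q j < p j} =>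
    h.exists_buyer (lt_of_le_of_lt (hQ j) j.2)
  let g' : {j // Q j < p j} → {i // w i < W i} := fun j => ⟨g j, hμB _ _ (hg j) j.2⟩
  let ν' : {i // w i < W i} → {j // Q j < p j} := fun i => ⟨ν i, hνA i i.2⟩
  have hg' : Function.Injective g' := by
    intro x y hxy
    have h1 := hg x
    rw [show g x = g y from congrArg Subtype.val hxy] at h1
    exact Subtype.ext (Option.some.inj (h1.symm.trans (hg y)))
  have hν' : Function.Injective ν' := fun x y hxy =>
    Subtype.ext (hinj x y x.2 y.2 (congrArg Subtype.val hxy))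
  have hcard := le_antisymm (Fintype.card_le_of_injective g' hg')
    (Fintype.card_le_of_injective ν' hν')
  have hgs := ((Fintype.bijective_iff_injective_and_card g').2 ⟨hg', hcard⟩).surjective
  have hνs := ((Fintype.bijective_iff_injective_and_card ν').2 ⟨hν', hcard.symm⟩).surjective
  obtain ⟨e1, e2, e3, e4, e5, e6, e7⟩ := h
  refine ⟨?_, fun j => le_min (e2 j) (hQ j), fun i => le_max_of_le_left (e3 i), ?_, ?_, ?_, ?_⟩
  · intro i i' j h1 h2
    by_cases hi : w i < W i <;> by_cases hi' : w i' < W i'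
    · simp only [hi, hi', if_true, Option.some.injEq] at h1 h2
      exact hinj i i' hi hi' (h1.trans h2.symm)
    · simp only [hi, hi', if_true, if_false, Option.some.injEq] at h1 h2
      exact absurd (hμB i' j h2 (h1 ▸ hνA i hi)) hi'
    · simp only [hi, hi', if_true, if_false, Option.some.injEq] at h1 h2
      exact absurd (hμB i j h1 (h2 ▸ hνA i' hi')) hi
    · simp only [hi, hi', if_false] at h1 h2
      exact e1 i i' j h1 h2
  · intro i j h1
    by_cases hi : w i < W i
    · simp only [hi, if_true, Option.some.injEq] at h1
      subst h1
      beta_reduce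
      rw [max_eq_right hi.le, min_eq_right (hνA i hi).le]
      exact hν i hi
    · simp only [hi, if_false] at h1
      beta_reduce
      rw [max_eq_left (not_lt.1 hi),
        min_eq_left (not_lt.1 fun hj => hi (hμB i j h1 hj))]
      exact e4 i j h1
  · intro i j
    beta_reduce
    rcases min_choice (p j) (Q j) with hm | hm <;> rw [hm]
    · exact le_max_of_le_left (e5 i j)
    · exact hle i j
  · intro i h1
    by_cases hi : w i < W i
    · simp [hi] at h1
    · simp only [hi, if_false] at h1
      beta_reduce
      rw [max_eq_left (not_lt.1 hi)]
      exact e6 i h1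
  · intro j hj
    by_cases hA : Q j < p j
    · obtain ⟨i, hi⟩ := hνs ⟨j, hA⟩
      refine absurd ?_ (hj i)
      simp only [i.2, if_true]
      exact congrArg some (congrArg Subtype.val hi)
    · beta_reduce
      rw [min_eq_left (not_lt.1 hA)]
      refine e7 j fun i hi => ?_
      by_cases hB : w i < W i
      · obtain ⟨j', hj'⟩ := hgs ⟨i, hB⟩
        have h1 := hg j'
        rw [show g j' = i from congrArg Subtype.val hj', hi] at h1
        exact hA (Option.some.inj h1 ▸ j'.2)
      · exact hj i (by simp only [hB, if_false]; exact hi)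

theorem IsEquilib.card_le_card_interested (h : IsEquilib M p w μ) {T : Finset J}
    (hT : ∀ j ∈ T, 0 < p j) :
    T.card ≤ (Finset.univ.filter fun i : I => ∃ j ∈ T, w i = M.u i j (p j)).card := by
  rcases isEmpty_or_nonempty I with hI | hI
  · rw [Finset.eq_empty_of_forall_notMem fun j hj => hI.elim (h.exists_buyer (hT j hj)).choose]
    simp
  choose! f hf using fun j (hj : j ∈ T) => h.exists_buyer (hT j hj)
  refine Finset.card_le_card_of_injOn f (fun j hj => ?_) fun x hx y hy hxy => ?_
  · simp only [Finset.coe_filter, Finset.mem_univ, true_and, Set.mem_ofPred_eq]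
    exact ⟨j, hj, h.2.2.2.1 _ j (hf j hj)⟩
  · have h1 := hf x hx
    rw [hxy, hf y hy] at h1
    exact (Option.some.inj h1).symm

/-- If a set of positively priced goods has only as many interested buyers as goods, some
price can be lowered. -/
theorem IsEquilib.exists_price_lt (h : IsEquilib M p w μ) {T : Finset J} (hne : T.Nonempty)
    (hT : ∀ j ∈ T, 0 < p j)
    (hcard : (Finset.univ.filter fun i : I => ∃ j ∈ T, w i = M.u i j (p j)).card ≤ T.card) :
    ∃ p' w' μ', IsEquilib M p' w' μ' ∧ ∃ j, p' j < p j := by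
  set D := Finset.univ.filter fun i : I => ∃ j ∈ T, w i = M.u i j (p j) with hD
  have hcard' : D.card = T.card := le_antisymm hcard (h.card_le_card_interested hT)
  have hreserve : ∀ j : T, ∃ x, 0 ≤ x ∧ x < p j ∧ ∀ i ∉ D, M.u i j x ≤ w i := by
    intro j
    have h1 : ∀ i ∉ D, M.u i j (p j) < w i := fun i hi =>
      lt_of_le_of_ne (h.2.2.2.2.1 i j) fun heq => hi (by simp [hD]; exact ⟨j, j.2, heq.symm⟩)
    have h2 : ∀ᶠ x in nhdsWithin (p j) (Set.Iio (p j)), ∀ i, i ∉ D → M.u i j x ≤ w i := by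
      refine Filter.eventually_all.2 fun i => ?_
      by_cases hi : i ∈ D
      · simp [hi]
      · filter_upwards [nhdsWithin_le_nhds
          ((M.cont i j).continuousAt.eventually_lt_const (h1 i hi))] with x hx _ using hx.le
    have h3 : ∀ᶠ x in nhdsWithin (p j) (Set.Iio (p j)), 0 < x :=
      nhdsWithin_le_nhds (lt_mem_nhds (hT j j.2))
    obtain ⟨x, hx1, hx2, hx3⟩ := (h2.and (h3.and self_mem_nhdsWithin)).exists
    exact ⟨x, hx2.le, hx3, hx1⟩
  choose r hr0 hrp hrD using hreserve
  have : Nonempty T := hne.to_subtype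
  obtain ⟨σ, g₀, q, hrq, hg₀, henvy⟩ := exists_envyFree (B := D) (G := T) (by simpa using hcard')
    (fun i j => M.u i j) (fun i j => M.cont i j) (fun i j => M.anti i j)
    (fun i j => M.surj i j) r
  let Q : J → ℝ := fun j => if hj : j ∈ T then q ⟨j, hj⟩ else p j
  let ν : I → J := fun i => if hi : i ∈ D then σ ⟨i, hi⟩ else g₀
  let W : I → ℝ := fun i => if i ∈ D then M.u i (ν i) (Q (ν i)) else w i
  have hQT : ∀ j : T, Q j = q j := fun j => by simp [Q]
  have hνD : ∀ i : D, ν i = σ i := fun i => by simp [ν]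
  have hWD : ∀ i, w i < W i → i ∈ D := fun i hi => by
    by_contra hiD
    simp [W, hiD] at hi
  refine ⟨_, _, _, h.meet (Q := Q) (W := W) (ν := ν) ?_ ?_ ?_ ?_, g₀, ?_⟩
  · intro j
    by_cases hj : j ∈ T
    · rw [hQT ⟨j, hj⟩]
      exact (hr0 _).trans (hrq _)
    · simp only [Q, hj, dif_neg, not_false_eq_true]
      exact h.2.1 j
  · intro i i' hi hi' hii
    rw [hνD ⟨i, hWD i hi⟩, hνD ⟨i', hWD i' hi'⟩] at hii
    exact congrArg Subtype.val (σ.injective (Subtype.ext hii))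
  · intro i hi
    simp only [W, hWD i hi, if_true]
  · intro i j
    by_cases hj : j ∈ T
    · rw [hQT ⟨j, hj⟩]
      by_cases hi : i ∈ D
      · refine le_max_of_le_right ?_
        simp only [W, hi, if_true, hνD ⟨i, hi⟩, hQT]
        exact henvy ⟨i, hi⟩ ⟨j, hj⟩
      · exact le_max_of_le_left (((M.anti i j).antitone (hrq ⟨j, hj⟩)).trans (hrD ⟨j, hj⟩ i hi))
    · simp only [Q, hj, dif_neg, not_false_eq_true]
      exact le_max_of_le_left (h.2.2.2.2.1 i j)
  · refine min_lt_of_right_lt ?_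
    rw [hQT, hg₀]
    exact hrp g₀

/-- Buyers interested in the goods that are cheaper in another equilibrium are all matched to such
goods there. -/
theorem IsEquilib.card_interested_le (h : IsEquilib M p w μ) {p' : J → ℝ} {w' : I → ℝ}
    {μ' : I → Option J} (h' : IsEquilib M p' w' μ') {T : Finset J}
    (hT : ∀ j, j ∈ T ↔ p' j < p j) :
    (Finset.univ.filter fun i : I => ∃ j ∈ T, w i = M.u i j (p j)).card ≤ T.card := by
  have hmatch : ∀ i : I, (∃ j ∈ T, w i = M.u i j (p j)) → ∃ j ∈ T, μ' i = some j := by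
    rintro i ⟨j, hj, hij⟩
    have hlt : w i < w' i := by
      rw [hij]
      exact (M.anti i j ((hT j).1 hj)).trans_le (h'.2.2.2.2.1 i j)
    rcases hm : μ' i with _ | j'
    · have h1 := h'.2.2.2.2.2.1 i hm
      have h2 := h.2.2.1 i
      linarith
    · refine ⟨j', (hT j').2 ?_, rfl⟩
      rw [h'.2.2.2.1 i j' hm] at hlt
      exact (M.anti i j').lt_iff_gt.1 ((h.2.2.2.2.1 i j').trans_lt hlt)
  rcases isEmpty_or_nonempty J with hJ | hJ
  · simp
  choose! f hf using hmatch
  refine Finset.card_le_card_of_injOn f (fun i hi => ?_) fun x hx y hy hxy => ?_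
  · exact (hf i (Finset.mem_filter.1 hi).2).1
  · have h1 := (hf x (Finset.mem_filter.1 hx).2).2
    have h2 := (hf y (Finset.mem_filter.1 hy).2).2
    exact h'.1 x y _ h1 (hxy ▸ h2)

end

/-- Tightness (lowest equilibrium): a competitive equilibrium `W` is the lowest
one iff for every nonempty set `T` of goods with strictly positive prices, at
least `|T| + 1` buyers are interested in `T` (attain the induced price of some
good in `T`). -/
theorem tightness_lowest {I J : Type} [Fintype I] [Fintype J] (M : Market I J)
    (p : J → ℝ) (w : I → ℝ) (μ : I → Option J) (h : IsEquilib M p w μ) :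
    IsLowest M p w μ ↔
      ∀ T : Finset J, T.Nonempty → (∀ j ∈ T, 0 < p j) →
        T.card + 1 ≤ (Finset.univ.filter fun i : I =>
          ∃ j ∈ T, Function.invFun (M.u i j) (w i) = inducedPrice M w j).card := by
  constructor
  · rintro ⟨-, hlow⟩ T hne hT
    rw [h.filter_interested_eq hT]
    by_contra hcon
    obtain ⟨p', w', μ', h', j, hj⟩ := h.exists_price_lt hne hT (by omega)
    exact (hlow p' w' μ' h' j).not_gt hj
  · intro htight
    refine ⟨h, fun p' w' μ' h' => ?_⟩
    by_contra! hcon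
    obtain ⟨j, hj⟩ := hcon
    obtain ⟨T, hT⟩ : ∃ T : Finset J, ∀ j, j ∈ T ↔ p' j < p j :=
      ⟨Finset.univ.filter fun j => p' j < p j, by simp⟩
    have hpos : ∀ j ∈ T, 0 < p j := fun j hj => (h'.2.1 j).trans_lt ((hT j).1 hj)
    have h1 := htight T ⟨j, (hT j).2 hj⟩ hpos
    rw [h.filter_interested_eq hpos] at h1
    have h2 := h.card_interested_le h' hT
    omega
end

section
/- (Critical Alternating Path, highest equilibrium) Let W be the highest competitive equilibrium of a unit-demand market with supporting matching μ. Then for every good j there exists a tight alternating path (alternating between matching edges of μ and non-matching tight edges, starting at j with a matching edge or of length 0) ending either at a buyer with payoff 0 or at an unmatched good. -/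
attribute [local instance] Classical.propDecidable

/-- A `δ`-approximate equilibrium with reserve prices `r` and outside options `c`: the prices are `q`,
and `ν` assigns to each good its buyer, if any. -/
structure IsApproxEquilib {S R : Type} (u : S → R → ℝ → ℝ) (c : S → ℝ) (r : R → ℝ) (δ : ℝ)
    (q : R → ℝ) (ν : R → Option S) : Prop where
  inj : ∀ g g' i, ν g = some i → ν g' = some i → g = g'
  reserve_le : ∀ g, r g ≤ q g
  eq_reserve : ∀ g, ν g = none → q g = r g
  prefers : ∀ g i, ν g = some i → ∀ g', u i g' (q g' + δ) ≤ u i g (q g)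
  outside_le : ∀ g i, ν g = some i → c i ≤ u i g (q g)
  le_outside : ∀ i, (∀ g, ν g ≠ some i) → ∀ g, u i g (q g + δ) ≤ c i

theorem exists_price_bound {S R : Type} [Finite S] (u : S → R → ℝ → ℝ)
    (anti : ∀ i g, StrictAnti (u i g)) (surj : ∀ i g, Function.Surjective (u i g)) (c : S → ℝ) :
    ∃ B : R → ℝ, ∀ i g x, c i ≤ u i g x → x ≤ B g := by
  choose y hy using fun i g => surj i g (c i)
  have hb : ∀ g, ∃ b, ∀ i, y i g ≤ b := fun g => by
    obtain ⟨b, hb⟩ := (Set.finite_range fun i => y i g).bddAbove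
    exact ⟨b, fun i => hb ⟨i, rfl⟩⟩
  choose B hB using hb
  refine ⟨B, fun i g x hx => le_trans ?_ (hB g i)⟩
  rw [← hy i g] at hx
  exact (anti i g).le_iff_ge.1 hx

/-- A multi-item ascending auction with increment `δ`, run to its largest total price, ends in a
`δ`-approximate equilibrium. -/
theorem exists_isApproxEquilib {S R : Type} [Finite S] [Finite R] (u : S → R → ℝ → ℝ)
    (anti : ∀ i g, StrictAnti (u i g)) (surj : ∀ i g, Function.Surjective (u i g))
    (c : S → ℝ) (r : R → ℝ) {δ : ℝ} (hδ : 0 < δ) :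
    ∃ q ν, IsApproxEquilib u c r δ q ν := by
  have := Fintype.ofFinite R
  obtain ⟨B, hB⟩ := exists_price_bound u anti surj c
  let P : (R → ℕ) → (R → Option S) → Prop := fun n ν =>
    (∀ g g' i, ν g = some i → ν g' = some i → g = g') ∧
    (∀ g, ν g = none → n g = 0) ∧
    (∀ g i, ν g = some i → ∀ g', u i g' (r g' + δ * n g' + δ) ≤ u i g (r g + δ * n g)) ∧
    (∀ g i, ν g = some i → c i ≤ u i g (r g + δ * n g))
  let A : Set ℕ := {k | ∃ n ν, P n ν ∧ ∑ g, n g = k}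
  have hne : A.Nonempty := ⟨0, fun _ => 0, fun _ => none, by simp [P], by simp⟩
  have hbdd : BddAbove A := by
    refine ⟨∑ g, ⌈(B g - r g) / δ⌉₊, ?_⟩
    rintro k ⟨n, ν, ⟨-, h2, -, h4⟩, rfl⟩
    refine Finset.sum_le_sum fun g _ => ?_
    rcases hg : ν g with _ | i
    · simp [h2 g hg]
    · have h := hB i g _ (h4 g i hg)
      have h' : (n g : ℝ) ≤ (B g - r g) / δ := by
        rw [le_div_iff₀ hδ]
        linarith
      exact_mod_cast h'.trans (Nat.le_ceil _)
  obtain ⟨n, ν, ⟨h1, h2, h3, h4⟩, hsum⟩ := Nat.sSup_mem hne hbdd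
  refine ⟨fun g => r g + δ * n g, ν, h1, fun g => ?_, fun g hg => by simp [h2 g hg], h3, h4, ?_⟩
  · have : 0 ≤ δ * n g := by positivity
    linarith
  intro i hi
  by_contra! ⟨g₀, hg₀⟩
  obtain ⟨g, -, hg⟩ := Finset.exists_max_image Finset.univ
    (fun g => u i g (r g + δ * n g + δ)) ⟨g₀, Finset.mem_univ _⟩
  have hcast : ∀ a, r a + δ * n a ≤ r a + δ * (Function.update n g (n g + 1) a : ℕ) := by
    intro a
    by_cases ha : a = g
    · subst ha
      simp only [Function.update_self, Nat.cast_add, Nat.cast_one]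
      linarith
    · simp [ha]
  have hnew : r g + δ * (Function.update n g (n g + 1) g : ℕ) = r g + δ * n g + δ := by
    simp only [Function.update_self, Nat.cast_add, Nat.cast_one]
    ring
  have hup : ∀ i a, u i a (r a + δ * (Function.update n g (n g + 1) a : ℕ) + δ) ≤
      u i a (r a + δ * n a + δ) := fun i a => (anti i a).antitone (by linarith [hcast a])
  have hP : P (Function.update n g (n g + 1)) (Function.update ν g (some i)) := by
    refine ⟨fun a b k ha hb => ?_, fun a ha => ?_, fun a k ha b => ?_, fun a k ha => ?_⟩
    · by_cases hag : a = g <;> by_cases hbg : b = g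
      · rw [hag, hbg]
      · subst hag
        rw [Function.update_self] at ha
        rw [Function.update_of_ne hbg, ← ha] at hb
        exact absurd hb (hi b)
      · subst hbg
        rw [Function.update_self] at hb
        rw [Function.update_of_ne hag, ← hb] at ha
        exact absurd ha (hi a)
      · rw [Function.update_of_ne hag] at ha
        rw [Function.update_of_ne hbg] at hb
        exact h1 a b k ha hb
    · by_cases hag : a = g
      · simp [hag] at ha
      · rw [Function.update_of_ne hag] at ha ⊢
        exact h2 a ha
    · refine (hup k b).trans ?_
      by_cases hag : a = g
      · subst hag
        rw [Function.update_self] at ha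
        obtain rfl := Option.some.inj ha
        rw [hnew]
        exact hg b (Finset.mem_univ _)
      · rw [Function.update_of_ne hag] at ha ⊢
        exact h3 a k ha b
    · by_cases hag : a = g
      · subst hag
        rw [Function.update_self] at ha
        obtain rfl := Option.some.inj ha
        rw [hnew]
        exact hg₀.le.trans (hg g₀ (Finset.mem_univ _))
      · rw [Function.update_of_ne hag] at ha ⊢
        exact h4 a k ha
  have hle := le_csSup hbdd ⟨_, _, hP, rfl⟩
  rw [← hsum] at hle
  refine absurd hle (not_le.2 ?_)
  refine Finset.sum_lt_sum (fun a _ => ?_) ⟨g, Finset.mem_univ _, by simp⟩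
  by_cases ha : a = g
  · subst ha
    simp
  · simp [ha]

/-- Approximate equilibria accumulate at exact equilibria, along which the assignment is constant. -/
theorem IsApproxEquilib.exists_limit {S R : Type} [Finite S] [Finite R] {u : S → R → ℝ → ℝ}
    (cont : ∀ i g, Continuous (u i g)) (anti : ∀ i g, StrictAnti (u i g))
    (surj : ∀ i g, Function.Surjective (u i g)) {c : S → ℝ} {r : R → ℝ} {δ s : ℕ → ℝ}
    (hδ : Filter.Tendsto δ Filter.atTop (nhds 0)) (hs : Filter.Tendsto s Filter.atTop (nhds 0))
    {q : ℕ → R → ℝ} {ν : ℕ → R → Option S}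
    (h : ∀ n, IsApproxEquilib u c (fun g => r g + s n) (δ n) (q n) (ν n)) :
    ∃ q' n, IsApproxEquilib u c r 0 q' (ν n) := by
  obtain ⟨B, hB⟩ := exists_price_bound u anti surj c
  obtain ⟨N, hN⟩ := Finite.exists_infinite_fiber ν
  have hfreq : ∃ᶠ n in Filter.atTop, ν n = N :=
    Nat.frequently_atTop_iff_infinite.2 (Set.infinite_coe_iff.1 hN)
  obtain ⟨φ, hφ, hφN⟩ := Filter.extraction_of_frequently_atTop hfreq
  obtain ⟨lo, hlo⟩ := hs.bddBelow_range
  obtain ⟨hi, hhi⟩ := hs.bddAbove_range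
  have hmem : ∀ n, q (φ n) ∈ Set.Icc (fun g => r g + lo) (fun g => max (r g + hi) (B g)) := by
    refine fun n => ⟨fun g => ?_, fun g => ?_⟩
    · have h1 := (h (φ n)).reserve_le g
      have h2 := hlo ⟨φ n, rfl⟩
      dsimp only at h1 ⊢
      linarith
    · rcases hg : ν (φ n) g with _ | i
      · have h1 := (h (φ n)).eq_reserve g hg
        have h2 := hhi ⟨φ n, rfl⟩
        refine le_max_of_le_left ?_
        linarith
      · exact le_max_of_le_right (hB i g _ ((h (φ n)).outside_le g i hg))
  obtain ⟨q', -, ψ, hψ, hlim⟩ := isCompact_Icc.tendsto_subseq hmem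
  have hθ : Filter.Tendsto (φ ∘ ψ) Filter.atTop Filter.atTop :=
    hφ.tendsto_atTop.comp hψ.tendsto_atTop
  have hq : ∀ g, Filter.Tendsto (fun k => q (φ (ψ k)) g) Filter.atTop (nhds (q' g)) :=
    fun g => (tendsto_pi_nhds.1 hlim) g
  have hr : ∀ g, Filter.Tendsto (fun k => r g + s (φ (ψ k))) Filter.atTop (nhds (r g)) :=
    fun g => by simpa using tendsto_const_nhds.add (hs.comp hθ)
  have hqδ : ∀ g, Filter.Tendsto (fun k => q (φ (ψ k)) g + δ (φ (ψ k))) Filter.atTop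
      (nhds (q' g + 0)) := fun g => (hq g).add (hδ.comp hθ)
  have hu : ∀ i g, Filter.Tendsto (fun k => u i g (q (φ (ψ k)) g)) Filter.atTop
      (nhds (u i g (q' g))) := fun i g => ((cont i g).tendsto _).comp (hq g)
  have huδ : ∀ i g, Filter.Tendsto (fun k => u i g (q (φ (ψ k)) g + δ (φ (ψ k)))) Filter.atTop
      (nhds (u i g (q' g + 0))) := fun i g => ((cont i g).tendsto _).comp (hqδ g)
  refine ⟨q', φ 0, (h _).inj, fun g => ?_, fun g hg => ?_, fun g i hg g' => ?_, fun g i hg => ?_,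
    fun i hi g => ?_⟩
  · exact le_of_tendsto_of_tendsto' (hr g) (hq g) fun k => (h _).reserve_le g
  · rw [hφN] at hg
    refine tendsto_nhds_unique (hq g) ?_
    exact (hr g).congr fun k => ((h _).eq_reserve g (by rw [hφN, hg])).symm
  · rw [hφN] at hg
    exact le_of_tendsto_of_tendsto' (huδ i g') (hu i g) fun k =>
      (h _).prefers g i (by rw [hφN, hg]) g'
  · rw [hφN] at hg
    exact ge_of_tendsto' (hu i g) fun k => (h _).outside_le g i (by rw [hφN, hg])
  · rw [hφN] at hi
    exact le_of_tendsto' (huδ i g) fun k => (h _).le_outside i (by rwa [hφN]) g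

theorem exists_isApproxEquilib_zero {S R : Type} [Finite S] [Finite R] (u : S → R → ℝ → ℝ)
    (cont : ∀ i g, Continuous (u i g)) (anti : ∀ i g, StrictAnti (u i g))
    (surj : ∀ i g, Function.Surjective (u i g)) (c : S → ℝ) (r : R → ℝ) :
    ∃ q ν, IsApproxEquilib u c r 0 q ν := by
  choose q ν h using fun n : ℕ => exists_isApproxEquilib u anti surj c (fun g => r g + 0)
    (Nat.one_div_pos_of_nat (α := ℝ) (n := n))
  obtain ⟨q', n, hq⟩ := IsApproxEquilib.exists_limit cont anti surj
    tendsto_one_div_add_atTop_nhds_zero_nat tendsto_const_nhds h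
  exact ⟨q', _, hq⟩

/-- If each good `g` is in the demand of its own buyer `g` at prices `p`, who strictly prefers it to
the outside option, then an exact equilibrium with reserve prices `p` assigns every good. -/
theorem IsApproxEquilib.ne_none {R : Type} [Finite R] {u : R → R → ℝ → ℝ}
    (anti : ∀ i g, StrictAnti (u i g)) {c p q : R → ℝ} {ν : R → Option R}
    (hp : ∀ i g, u i g (p g) ≤ u i i (p i)) (hc : ∀ i, c i < u i i (p i))
    (h : IsApproxEquilib u c p 0 q ν) (g₀ : R) : ν g₀ ≠ none := by
  intro hg₀
  have key : ∀ g : {g // q g = p g}, ∃ g' : {g // q g = p g}, ν g' = some g.1 := by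
    rintro ⟨g, hg⟩
    by_cases hm : ∃ g', ν g' = some g
    · obtain ⟨g', hg'⟩ := hm
      have h1 := h.prefers g' g hg' g
      rw [add_zero, hg] at h1
      have h2 := (anti g g').le_iff_ge.1 ((hp g g').trans h1)
      exact ⟨⟨g', le_antisymm h2 (h.reserve_le g')⟩, hg'⟩
    · push Not at hm
      have h1 := h.le_outside g hm g
      rw [add_zero, hg] at h1
      exact absurd h1 (not_le.2 (hc g))
  choose f hf using key
  have finj : Function.Injective f := by
    intro a b hab
    have h1 := hf a
    rw [hab, hf b] at h1
    exact Subtype.ext (Option.some.inj h1).symm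
  obtain ⟨a, ha⟩ := Finite.injective_iff_surjective.1 finj ⟨g₀, h.eq_reserve g₀ hg₀⟩
  have h1 := hf a
  rw [ha, hg₀] at h1
  simp at h1

/-- In a market with as many buyers as goods, all strictly preferring their own good to the outside
option, all prices can be raised strictly while keeping a perfect competitive assignment. -/
theorem exists_raised_prices {R : Type} [Finite R] (u : R → R → ℝ → ℝ)
    (cont : ∀ i g, Continuous (u i g)) (anti : ∀ i g, StrictAnti (u i g))
    (surj : ∀ i g, Function.Surjective (u i g)) (c p : R → ℝ)
    (hp : ∀ i g, u i g (p g) ≤ u i i (p i)) (hc : ∀ i, c i < u i i (p i)) :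
    ∃ (q : R → ℝ) (σ : R → R), Function.Injective σ ∧ (∀ g, p g < q g) ∧
      (∀ i g, u i g (q g) ≤ u i (σ i) (q (σ i))) ∧ ∀ i, c i ≤ u i (σ i) (q (σ i)) := by
  choose q ν h using fun n : ℕ => exists_isApproxEquilib_zero u cont anti surj c
    (fun g => p g + 1 / ((n : ℝ) + 1))
  obtain ⟨q', n, h'⟩ := IsApproxEquilib.exists_limit cont anti surj
    tendsto_const_nhds tendsto_one_div_add_atTop_nhds_zero_nat h
  choose τ hτ using fun g => Option.ne_none_iff_exists'.1 (h'.ne_none anti hp hc g)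
  have τinj : Function.Injective τ := fun a b hab => h'.inj a b (τ a) (hτ a) (by rw [hτ b, hab])
  choose σ hσ using Finite.injective_iff_surjective.1 τinj
  have hνσ : ∀ i, ν n (σ i) = some i := fun i => by rw [hτ, hσ]
  refine ⟨q n, σ, Function.LeftInverse.injective hσ, fun g => ?_, fun i g => ?_, fun i => ?_⟩
  · have h1 := (h n).reserve_le g
    have h2 := Nat.one_div_pos_of_nat (α := ℝ) (n := n)
    linarith
  · simpa using (h n).prefers (σ i) i (hνσ i) g
  · exact (h n).outside_le _ i (hνσ i)

/-- At the highest equilibrium, a nonempty set of matched goods whose buyers have positive payoffs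
cannot contain all goods demanded by these buyers. -/
theorem IsHighest.exists_tight_notMem {I J : Type} [Fintype I] [Fintype J] {M : Market I J}
    {p : J → ℝ} {w : I → ℝ} {μ : I → Option J} (h : IsHighest M p w μ) (R : Set J)
    (hR : R.Nonempty) (hmatch : ∀ g ∈ R, ∃ i, μ i = some g)
    (hpos : ∀ g ∈ R, ∀ i, μ i = some g → 0 < w i) :
    ∃ g ∈ R, ∃ i, μ i = some g ∧ ∃ g' ∉ R, w i = M.u i g' (p g') := by
  by_contra! hcon
  obtain ⟨⟨hinj, hp0, hw0, hμ, hle, hnone, hunm⟩, hmax⟩ := h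
  choose b hb using fun g : R => hmatch g g.2
  have hbinj : Function.Injective b := fun x y hxy =>
    Subtype.ext (Option.some.inj ((hb x).symm.trans (by rw [hxy, hb y])))
  have hc : ∀ x : R, ∃ c, 0 ≤ c ∧ c < w (b x) ∧ ∀ g ∉ R, M.u (b x) g (p g) ≤ c := by
    intro x
    let F : Finset ℝ := insert 0 ((Finset.univ.filter (· ∉ R)).image fun g => M.u (b x) g (p g))
    refine ⟨F.max' (Finset.insert_nonempty _ _), F.le_max' 0 (Finset.mem_insert_self _ _), ?_, ?_⟩
    · rw [Finset.max'_lt_iff]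
      intro y hy
      rcases Finset.mem_insert.1 hy with rfl | hy
      · exact hpos x x.2 _ (hb x)
      · obtain ⟨g, hg, rfl⟩ := Finset.mem_image.1 hy
        exact lt_of_le_of_ne (hle _ _) (hcon x x.2 _ (hb x) g (Finset.mem_filter.1 hg).2).symm
    · intro g hg
      exact F.le_max' _ (Finset.mem_insert_of_mem
        (Finset.mem_image.2 ⟨g, Finset.mem_filter.2 ⟨Finset.mem_univ _, hg⟩, rfl⟩))
  choose c hc0 hcw hcout using hc
  obtain ⟨q, σ, σinj, hpq, hqle, hqc⟩ := exists_raised_prices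
    (fun x g : R => M.u (b x) g) (fun x g => M.cont _ _) (fun x g => M.anti _ _)
    (fun x g => M.surj _ _) c (fun g => p g)
    (fun x g => (hμ _ _ (hb x)) ▸ hle _ _) (fun x => (hμ _ _ (hb x)) ▸ hcw x)
  have σsurj := Finite.injective_iff_surjective.1 σinj
  let p' : J → ℝ := fun g => if hg : g ∈ R then q ⟨g, hg⟩ else p g
  let w' : I → ℝ := fun i => if hi : ∃ x, b x = i then M.u i (σ hi.choose) (q (σ hi.choose)) else w i
  let μ' : I → Option J := fun i => if hi : ∃ x, b x = i then some (σ hi.choose) else μ i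
  have hp'R : ∀ x : R, p' x = q x := fun x => dif_pos x.2
  have hp'N : ∀ g ∉ R, p' g = p g := fun g hg => dif_neg hg
  have hex : ∀ x (hi : ∃ y, b y = b x), hi.choose = x := fun x hi => hbinj hi.choose_spec
  have hw'b : ∀ x, w' (b x) = M.u (b x) (σ x) (q (σ x)) := fun x => by
    have hi : ∃ y, b y = b x := ⟨x, rfl⟩
    simp only [w', dif_pos hi, hex x hi]
  have hμ'b : ∀ x, μ' (b x) = some (σ x : J) := fun x => by
    have hi : ∃ y, b y = b x := ⟨x, rfl⟩
    simp only [μ', dif_pos hi, hex x hi]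
  have hw'N : ∀ i, (¬ ∃ x, b x = i) → w' i = w i := fun i hi => by simp only [w', dif_neg hi]
  have hμ'N : ∀ i, (¬ ∃ x, b x = i) → μ' i = μ i := fun i hi => by simp only [μ', dif_neg hi]
  have hNR : ∀ i, (¬ ∃ x, b x = i) → ∀ g, μ i = some g → g ∉ R := fun i hi g hg hgR =>
    hi ⟨⟨g, hgR⟩, hinj _ _ g (hb ⟨g, hgR⟩) hg⟩
  have hpp' : ∀ g, p g ≤ p' g := fun g => by
    by_cases hg : g ∈ R
    · exact (hpq ⟨g, hg⟩).le.trans_eq (hp'R ⟨g, hg⟩).symm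
    · rw [hp'N g hg]
  have heq : IsEquilib M p' w' μ' := by
    refine ⟨fun i i' g hi hi' => ?_, fun g => (hp0 g).trans (hpp' g), fun i => ?_,
      fun i g hi => ?_, fun i g => ?_, fun i hi => ?_, fun g hg => ?_⟩
    · by_cases hx : ∃ x, b x = i <;> by_cases hy : ∃ y, b y = i'
      · obtain ⟨x, rfl⟩ := hx
        obtain ⟨y, rfl⟩ := hy
        rw [hμ'b] at hi hi'
        rw [σinj (Subtype.ext (Option.some.inj (hi.trans hi'.symm)))]
      · obtain ⟨x, rfl⟩ := hx
        rw [hμ'b] at hi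
        rw [hμ'N i' hy] at hi'
        exact absurd (Option.some.inj hi ▸ (σ x).2) (hNR i' hy g hi')
      · obtain ⟨y, rfl⟩ := hy
        rw [hμ'b] at hi'
        rw [hμ'N i hx] at hi
        exact absurd (Option.some.inj hi' ▸ (σ y).2) (hNR i hx g hi)
      · rw [hμ'N i hx] at hi
        rw [hμ'N i' hy] at hi'
        exact hinj i i' g hi hi'
    · by_cases hx : ∃ x, b x = i
      · obtain ⟨x, rfl⟩ := hx
        rw [hw'b]
        exact (hc0 x).trans (hqc x)
      · rw [hw'N i hx]
        exact hw0 i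
    · by_cases hx : ∃ x, b x = i
      · obtain ⟨x, rfl⟩ := hx
        rw [hμ'b] at hi
        rw [← Option.some.inj hi, hw'b, hp'R]
      · rw [hμ'N i hx] at hi
        rw [hw'N i hx, hp'N g (hNR i hx g hi)]
        exact hμ i g hi
    · by_cases hx : ∃ x, b x = i
      · obtain ⟨x, rfl⟩ := hx
        rw [hw'b]
        by_cases hg : g ∈ R
        · exact (hp'R ⟨g, hg⟩) ▸ hqle x ⟨g, hg⟩
        · rw [hp'N g hg]
          exact (hcout x g hg).trans (hqc x)
      · rw [hw'N i hx]
        exact ((M.anti i g).antitone (hpp' g)).trans (hle i g)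
    · by_cases hx : ∃ x, b x = i
      · obtain ⟨x, rfl⟩ := hx
        simp [hμ'b] at hi
      · rw [hμ'N i hx] at hi
        rw [hw'N i hx]
        exact hnone i hi
    · have hgR : g ∉ R := fun hgR => by
        obtain ⟨x, hx⟩ := σsurj ⟨g, hgR⟩
        exact hg (b x) (by rw [hμ'b, hx])
      rw [hp'N g hgR]
      refine hunm g fun i hi => ?_
      by_cases hx : ∃ x, b x = i
      · obtain ⟨x, rfl⟩ := hx
        rw [hb x] at hi
        exact hgR (Option.some.inj hi ▸ x.2)
      · exact hg i (by rw [hμ'N i hx, hi])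
  obtain ⟨g, hg⟩ := hR
  have h1 := hmax _ _ _ heq g
  rw [hp'R ⟨g, hg⟩] at h1
  exact absurd h1 (not_le.2 (hpq ⟨g, hg⟩))

theorem Relation.ReflTransGen.exists_injOn_path {α : Type*} {r : α → α → Prop} {a x : α}
    (h : Relation.ReflTransGen r a x) :
    ∃ (m : ℕ) (f : ℕ → α), f 0 = a ∧ f m = x ∧ Set.InjOn f (Set.Iic m) ∧
      ∀ k < m, r (f k) (f (k + 1)) := by
  induction h with
  | refl =>
    refine ⟨0, fun _ => a, rfl, rfl, fun k hk l hl _ => ?_, by simp⟩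
    rw [Set.mem_Iic] at hk hl
    omega
  | @tail y z _ hyz ih =>
    obtain ⟨m, f, h0, hm, hinj, hr⟩ := ih
    by_cases hz : ∃ k ≤ m, f k = z
    · obtain ⟨k, hk, hkz⟩ := hz
      exact ⟨k, f, h0, hkz, hinj.mono (Set.Iic_subset_Iic.2 hk), fun l hl => hr l (by omega)⟩
    · push Not at hz
      have hf : ∀ k ≤ m, Function.update f (m + 1) z k = f k := fun k hk =>
        Function.update_of_ne (by omega) _ _
      refine ⟨m + 1, Function.update f (m + 1) z, by rw [hf 0 (Nat.zero_le _), h0],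
        Function.update_self .., fun k hk l hl hkl => ?_, fun k hk => ?_⟩
      · rw [Set.mem_Iic] at hk hl
        rcases Nat.le_succ_iff.1 hk with hk | rfl <;> rcases Nat.le_succ_iff.1 hl with hl | rfl
        · rw [hf k hk, hf l hl] at hkl
          exact hinj hk hl hkl
        · rw [hf k hk, Function.update_self] at hkl
          exact absurd hkl (hz k hk)
        · rw [hf l hl, Function.update_self] at hkl
          exact absurd hkl.symm (hz l hl)
        · rfl
      · rw [hf k (by omega)]
        rcases Nat.lt_or_ge k m with h | h
        · rw [hf (k + 1) (by omega)]
          exact hr k h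
        · obtain rfl : k = m := by omega
          rw [Function.update_self, hm]
          exact hyz

/-- Critical alternating path at the highest equilibrium: for every good `j`
there is a tight alternating path (starting at `j` with a matching edge, or of
length 0) ending at an unmatched good or at a buyer with payoff `0`. -/
theorem critical_path_highest {I J : Type} [Fintype I] [Fintype J] (M : Market I J)
    (p : J → ℝ) (w : I → ℝ) (μ : I → Option J) (h : IsHighest M p w μ) (j : J) :
    -- either a path j = g 0, b 0, g 1, b 1, ..., g m with `g m` unmatched
    (∃ (m : ℕ) (g : Fin (m+1) → J) (b : Fin m → I),
      g 0 = j ∧ Function.Injective g ∧ Function.Injective b ∧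
      (∀ k : Fin m, μ (b k) = some (g k.castSucc)) ∧
      (∀ k : Fin m, w (b k) = M.u (b k) (g k.succ) (p (g k.succ))) ∧
      (∀ i, μ i ≠ some (g (Fin.last m)))) ∨
    -- or a path j = g 0, b 0, g 1, b 1, ..., g m, b m with `w (b m) = 0`
    (∃ (m : ℕ) (g : Fin (m+1) → J) (b : Fin (m+1) → I),
      g 0 = j ∧ Function.Injective g ∧ Function.Injective b ∧
      (∀ k : Fin (m+1), μ (b k) = some (g k)) ∧
      (∀ k : Fin m, w (b k.castSucc) = M.u (b k.castSucc) (g k.succ) (p (g k.succ))) ∧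
      w (b (Fin.last m)) = 0) := by
  obtain ⟨hinj, -, hw0, -⟩ := id h.1
  let step : J → J → Prop := fun g g' => ∃ i, μ i = some g ∧ w i = M.u i g' (p g')
  have hend : ∃ x, Relation.ReflTransGen step j x ∧
      ((∀ i, μ i ≠ some x) ∨ ∃ i, μ i = some x ∧ w i = 0) := by
    by_contra! hcon
    obtain ⟨g, hg, i, hi, g', hg', hw⟩ := h.exists_tight_notMem
      {x | Relation.ReflTransGen step j x} ⟨j, Relation.ReflTransGen.refl⟩
      (fun g hg => (hcon g hg).1)
      (fun g hg i hi => lt_of_le_of_ne (hw0 i) ((hcon g hg).2 i hi).symm)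
    exact hg' (hg.tail ⟨i, hi, hw⟩)
  obtain ⟨x, hx, hx'⟩ := hend
  obtain ⟨m, f, hf0, hfm, hfinj, hstep⟩ := hx.exists_injOn_path
  have hg : Function.Injective fun k : Fin (m + 1) => f k := fun k l hkl =>
    Fin.ext (hfinj (Set.mem_Iic.2 (by omega)) (Set.mem_Iic.2 (by omega)) hkl)
  choose b hbμ hbw using fun k : Fin m => hstep k k.2
  have hbinj : Function.Injective b := fun k l hkl => by
    have h1 := hbμ k
    rw [hkl, hbμ l] at h1
    exact (Fin.castSucc_injective m (hg (Option.some.inj h1))).symm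
  rcases hx' with hx' | ⟨i, hi, hwi⟩
  · exact Or.inl ⟨m, fun k => f k, b, hf0, hg, hbinj, hbμ, hbw, by simpa [hfm] using hx'⟩
  · have hμ : ∀ k : Fin (m + 1), μ (Fin.snoc (α := fun _ => I) b i k) = some (f k) := by
      intro k
      induction k using Fin.lastCases with
      | last => simpa [hfm] using hi
      | cast k => simpa using hbμ k
    refine Or.inr ⟨m, fun k => f k, Fin.snoc (α := fun _ => I) b i, hf0, hg, fun k l hkl => ?_, hμ,
      fun k => by simpa using hbw k, by simpa using hwi⟩
    have h1 := hμ k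
    rw [hkl, hμ l] at h1
    exact (hg (Option.some.inj h1)).symm
end

section
/- (Critical Alternating Path, lowest equilibrium) Let W be the lowest competitive equilibrium of a unit-demand market with supporting matching μ. Then for every buyer i there exists a tight alternating path starting at i (with a matching edge or of length 0) ending either at a good with price 0 or at an unmatched buyer. -/
attribute [local instance] Classical.propDecidable

/-- A finite ascending auction with bid increment `δ`: with as many goods as bidders, it ends with
every good sold, at prices within `δ` of being competitive, and some good sold at its reserve. -/
lemma exists_approx_perfect_equilibrium {A : Type} [Fintype A] [Nonempty A]
    (u : A → A → ℝ → ℝ) (hanti : ∀ i j, StrictAnti (u i j)) (r : A → ℝ) (B : ℝ)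
    (hB : ∀ i j l, u i j B ≤ u i l (r l + 1)) (δ : ℝ) (hδ : 0 < δ) (hδ1 : δ ≤ 1) :
    ∃ (σ : Equiv.Perm A) (l : A) (x : A → ℝ), (∀ j, r j ≤ x j) ∧ x l = r l ∧
      ∀ i j, u i j (x j + δ) ≤ u i (σ i) (x (σ i)) := by
  -- `k j` counts the bids received by `j`, so the next bid on `j` must be `r j + k j * δ`
  let IsState : (A → ℕ) → (A → Option A) → Prop := fun k s =>
    (∀ i i' j, s i = some j → s i' = some j → i = i') ∧
    (∀ j, k j ≠ 0 → ∃ i, s i = some j) ∧ (∀ i j, s i = some j → k j ≠ 0) ∧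
    (∀ i j, s i = some j → ∀ l, u i l (r l + k l * δ) ≤ u i j (r j + ((k j : ℝ) - 1) * δ)) ∧
    ∃ l, k l ≤ 1
  have hbound : ∃ N : ℕ, ∀ k s, IsState k s → ∑ j, k j ≤ N := by
    have h1 : ∀ j, ∃ n : ℕ, (B - r j) / δ + 1 ≤ n := fun j => exists_nat_ge _
    choose n hn using h1
    refine ⟨∑ j, n j, fun k s ⟨_, h2, _, h4, l, hl⟩ => Finset.sum_le_sum fun j _ => ?_⟩
    by_cases hk : k j = 0
    · omega
    obtain ⟨i, hi⟩ := h2 j hk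
    have h5 := h4 i j hi l
    have hl' : (k l : ℝ) ≤ 1 := by exact_mod_cast hl
    have h6 : u i l (r l + 1) ≤ u i l (r l + k l * δ) := (hanti i l).antitone (by nlinarith)
    have h7 := (hanti i j).le_iff_ge.1 ((hB i j l).trans (h6.trans h5))
    have h8 : ((k j : ℝ) - 1) ≤ (B - r j) / δ := by
      rw [le_div_iff₀ hδ]; linarith
    have h9 : (k j : ℝ) ≤ n j := by linarith [hn j]
    exact_mod_cast h9
  obtain ⟨N, hN⟩ := hbound
  let P : ℕ → Prop := fun m => ∃ k s, IsState k s ∧ ∑ j, k j = m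
  have hP0 : P 0 := by
    refine ⟨fun _ => 0, fun _ => none, ⟨by simp, by simp, by simp, by simp, ?_⟩, by simp⟩
    exact ⟨Classical.arbitrary A, by simp⟩
  obtain ⟨k, s, hst, hsum⟩ : P (Nat.findGreatest P N) := Nat.findGreatest_spec (Nat.zero_le N) hP0
  have hmax : ∀ k' s', IsState k' s' → ∑ j, k' j ≤ ∑ j, k j := fun k' s' h' => by
    rw [hsum]
    exact Nat.le_findGreatest (hN _ _ h') ⟨k', s', h', rfl⟩
  obtain ⟨h1, h2, h3, h4, l, hl⟩ := hst
  have hall : ∀ i, ∃ j, s i = some j := by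
    by_contra! hcon
    obtain ⟨i, hi⟩ := hcon
    obtain ⟨f, hf⟩ : ∃ f, k f = 0 := by
      by_contra! hk
      choose t ht using fun j => h2 j (hk j)
      have htinj : Function.Injective t := fun a b hab => by
        have := ht a
        rw [hab, ht b] at this
        simpa using this.symm
      obtain ⟨j, hj⟩ := (Finite.injective_iff_surjective.1 htinj) i
      exact hi j (hj ▸ ht j)
    obtain ⟨j, hj⟩ := Finite.exists_max fun j => u i j (r j + k j * δ)
    let k' : A → ℕ := fun l => if l = j then k j + 1 else k l
    let s' : A → Option A := fun a => if a = i then some j else if s a = some j then none else s a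
    have hkk : ∀ l, k l ≤ k' l := fun l => by
      by_cases h : l = j
      · subst h; simp [k']
      · simp [k', h]
    have hstate : IsState k' s' := by
      refine ⟨?_, ?_, ?_, ?_, f, ?_⟩
      · intro a b c ha hb
        simp only [s'] at ha hb
        grind
      · intro c hc
        by_cases hcj : c = j
        · exact ⟨i, by simp [s', hcj]⟩
        · simp only [k', hcj, if_false] at hc
          obtain ⟨a, ha⟩ := h2 c hc
          refine ⟨a, ?_⟩
          have hai : a ≠ i := by rintro rfl; exact hi c ha
          simp [s', hai, ha, hcj]
      · intro a c ha
        by_cases hcj : c = j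
        · simp [k', hcj]
        · simp only [k', hcj, if_false]
          simp only [s'] at ha
          split_ifs at ha <;> grind
      · intro a c ha l
        have hmono : u a l (r l + k' l * δ) ≤ u a l (r l + k l * δ) := by
          apply (hanti a l).antitone
          have : (k l : ℝ) ≤ k' l := by exact_mod_cast hkk l
          nlinarith
        refine hmono.trans ?_
        by_cases hai : a = i
        · subst hai
          have hcj : j = c := by simpa [s'] using ha
          subst hcj
          simpa [k'] using hj l
        · have hac : s a = some c ∧ c ≠ j := by
            simp only [s', hai, if_false] at ha
            grind
          simpa [k', hac.2] using h4 a c hac.1 l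
      · by_cases hfj : f = j
        · subst hfj; simp [k', hf]
        · simp [k', hfj, hf]
    have hlt : ∑ l, k l < ∑ l, k' l :=
      Finset.sum_lt_sum (fun l _ => hkk l) ⟨j, Finset.mem_univ _, by simp [k']⟩
    exact absurd (hmax _ _ hstate) (not_le.2 hlt)
  choose t ht using hall
  have htinj : Function.Injective t := fun a b hab => h1 a b (t a) (ht a) (hab ▸ ht b)
  have htb : Function.Bijective t := ⟨htinj, Finite.injective_iff_surjective.1 htinj⟩
  have hpos : ∀ j, 1 ≤ k j := fun j => by
    obtain ⟨i, rfl⟩ := htb.2 j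
    exact Nat.one_le_iff_ne_zero.2 (h3 i _ (ht i))
  refine ⟨Equiv.ofBijective t htb, l, fun j => r j + ((k j : ℝ) - 1) * δ, fun j => ?_, ?_, ?_⟩
  · have : (1 : ℝ) ≤ k j := by exact_mod_cast hpos j
    nlinarith
  · have : k l = 1 := le_antisymm hl (hpos l)
    simp [this]
  · intro i j
    have := h4 i (t i) (ht i) j
    simp only [Equiv.ofBijective_apply]
    convert this using 2
    ring

/-- With as many goods as bidders there is an equilibrium selling every good, with prices above the
reserves `r` and with some good sold at its reserve. -/
lemma exists_perfect_equilibrium {A : Type} [Fintype A] [Nonempty A]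
    (u : A → A → ℝ → ℝ) (hcont : ∀ i j, Continuous (u i j)) (hanti : ∀ i j, StrictAnti (u i j))
    (hsurj : ∀ i j, Function.Surjective (u i j)) (r : A → ℝ) :
    ∃ (σ : Equiv.Perm A) (l : A) (x : A → ℝ), (∀ j, r j ≤ x j) ∧ x l = r l ∧
      ∀ i j, u i j (x j) ≤ u i (σ i) (x (σ i)) := by
  obtain ⟨B, hB⟩ : ∃ B, ∀ i j l, u i j B ≤ u i l (r l + 1) := by
    choose y hy using fun q : A × A × A => hsurj q.1 q.2.1 (u q.1 q.2.2 (r q.2.2 + 1))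
    obtain ⟨q, hq⟩ := Finite.exists_max y
    exact ⟨y q, fun i j l =>
      ((hanti i j).antitone (hq (i, j, l))).trans (hy (i, j, l)).le⟩
  have hd0 : ∀ n : ℕ, (0 : ℝ) < 1 / ((n : ℝ) + 1) := fun n => by positivity
  have hd1 : ∀ n : ℕ, 1 / ((n : ℝ) + 1) ≤ 1 := fun n => by
    rw [div_le_one (by positivity)]; linarith [n.cast_nonneg (α := ℝ)]
  choose σ l x hr hl hu using fun n : ℕ =>
    exists_approx_perfect_equilibrium u hanti r B hB _ (hd0 n) (hd1 n)
  have hxB : ∀ n j, x n j ≤ B := fun n j => by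
    have h1 := hu n ((σ n).symm j) (l n)
    rw [Equiv.apply_symm_apply, hl] at h1
    have h2 := (hanti ((σ n).symm j) (l n)).antitone (by linarith [hd1 n] :
      r (l n) + 1 / ((n : ℝ) + 1) ≤ r (l n) + 1)
    exact (hanti _ j).le_iff_ge.1 ((hB _ j (l n)).trans (h2.trans h1))
  have hmem : ∀ n, x n ∈ Set.Icc r (fun _ => B) := fun n => ⟨hr n, hxB n⟩
  obtain ⟨⟨τ, m⟩, hinf⟩ := Finite.exists_infinite_fiber fun n => (σ n, l n)
  have hinf' : ((fun n => (σ n, l n)) ⁻¹' {(τ, m)}).Infinite := Set.infinite_coe_iff.1 hinf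
  obtain ⟨φ, hφ, hφm⟩ : ∃ φ : ℕ → ℕ, StrictMono φ ∧ ∀ n, σ (φ n) = τ ∧ l (φ n) = m := by
    obtain ⟨φ, h1, h2⟩ := Filter.extraction_of_frequently_atTop
      (Nat.frequently_atTop_iff_infinite.2 hinf')
    exact ⟨φ, h1, fun n => by simpa using h2 n⟩
  obtain ⟨z, hz, ψ, hψ, hlim⟩ := isCompact_Icc.tendsto_subseq fun n => hmem (φ n)
  have hlim' := tendsto_pi_nhds.1 hlim
  have hdlim : Filter.Tendsto (fun n => 1 / (((φ (ψ n) : ℕ) : ℝ) + 1)) Filter.atTop (nhds 0) :=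
    tendsto_one_div_add_atTop_nhds_zero_nat.comp ((hφ.comp hψ).tendsto_atTop)
  refine ⟨τ, m, z, hz.1, ?_, fun i j => ?_⟩
  · refine tendsto_nhds_unique (hlim' m) (tendsto_const_nhds.congr fun n => ?_)
    have := hl (φ (ψ n))
    rw [(hφm _).2] at this
    exact this.symm
  · have h1 := ((hcont i j).tendsto _).comp ((hlim' j).add hdlim)
    rw [add_zero] at h1
    refine le_of_tendsto_of_tendsto' h1 (((hcont i (τ i)).tendsto _).comp (hlim' (τ i)))
      fun n => ?_
    have := hu (φ (ψ n)) i j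
    rw [(hφm _).1] at this
    exact this

/-- If the buyers in `S` are matched by `g` to goods of positive price, no other buyer has a tight
edge to these goods, then some competitive equilibrium has a lower price on one of them. -/
lemma IsEquilib.exists_price_lt_s8 {I J : Type} [Fintype I] [Fintype J] {M : Market I J}
    {p : J → ℝ} {w : I → ℝ} {μ : I → Option J} (h : IsEquilib M p w μ) (S : Set I)
    (hS : S.Nonempty) (g : S → J) (hg : ∀ a : S, μ a = some (g a)) (hpos : ∀ a, 0 < p (g a))
    (hclosed : ∀ i ∉ S, ∀ a, w i ≠ M.u i (g a) (p (g a))) :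
    ∃ p' w' μ', IsEquilib M p' w' μ' ∧ ∃ j, p' j < p j := by
  obtain ⟨hinj, hp, hw, hmatch, hstab, hnone, hunm⟩ := h
  have : Nonempty S := hS.to_subtype
  have hginj : Function.Injective g := fun a b hab =>
    Subtype.ext (hinj _ _ (g a) (hg a) (hab ▸ hg b))
  have hres : ∀ a, ∃ r, 0 ≤ r ∧ r < p (g a) ∧ ∀ i ∉ S, M.u i (g a) r ≤ w i := by
    intro a
    have h1 : ∀ᶠ r in nhds (p (g a)), ∀ i, i ∉ S → M.u i (g a) r < w i := by
      rw [Filter.eventually_all]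
      intro i
      by_cases hi : i ∈ S
      · simp [hi]
      · filter_upwards [(M.cont i (g a)).continuousAt.eventually_lt_const
          (lt_of_le_of_ne (hstab i (g a)) (hclosed i hi a).symm)] with r hr _ using hr
    obtain ⟨r, ⟨hr1, hr2⟩, hr3⟩ := (((h1.and (lt_mem_nhds (hpos a))).filter_mono
      nhdsWithin_le_nhds).and (self_mem_nhdsWithin (s := Set.Iio (p (g a))))).exists
    exact ⟨r, le_of_lt hr2, hr3, fun i hi => (hr1 i hi).le⟩
  choose r hr0 hrp hrout using hres
  obtain ⟨σ, l, x, hrx, hxl, hx⟩ := exists_perfect_equilibrium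
    (fun (i j : S) => M.u i (g j)) (fun i j => M.cont i (g j)) (fun i j => M.anti i (g j))
    (fun i j => M.surj i (g j)) r
  let v : S → ℝ := fun a => M.u a (g (σ a)) (x (σ a))
  let τ : S → S := fun a => if v a < w a then a else σ a
  have hW : ∀ a : S, v a < w a → p (g a) < x a := fun a ha => by
    rw [hmatch a _ (hg a)] at ha
    exact (M.anti a (g a)).lt_iff_gt.1 ((hx a a).trans_lt ha)
  have hnW : ∀ a : S, ¬ v a < w a → x (σ a) ≤ p (g (σ a)) := fun a ha =>
    (M.anti a (g (σ a))).le_iff_ge.1 ((hstab _ _).trans (not_lt.1 ha))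
  have hτinj : Function.Injective τ := by
    intro a b hab
    by_cases ha : v a < w a <;> by_cases hb : v b < w b <;>
      simp only [τ, ha, hb, if_true, if_false] at hab
    · exact hab
    · have := hW a ha
      rw [hab] at this
      exact absurd this (not_lt.2 (hnW b hb))
    · have := hW b hb
      rw [← hab] at this
      exact absurd this (not_lt.2 (hnW a ha))
    · exact σ.injective hab
  have hτsurj := Finite.injective_iff_surjective.1 hτinj
  let p' : J → ℝ := fun j => if hj : ∃ a, g a = j then min (p j) (x hj.choose) else p j
  have hp'g : ∀ a, p' (g a) = min (p (g a)) (x a) := fun a => by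
    have hj : ∃ b, g b = g a := ⟨a, rfl⟩
    simp only [p', dif_pos hj, hginj hj.choose_spec]
  have hp'n : ∀ j, (¬ ∃ a, g a = j) → p' j = p j := fun j hj => by simp only [p', dif_neg hj]
  let w' : I → ℝ := fun i => if hi : i ∈ S then max (w i) (v ⟨i, hi⟩) else w i
  let μ' : I → Option J := fun i => if hi : i ∈ S then some (g (τ ⟨i, hi⟩)) else μ i
  have hw'S : ∀ a : S, w' a = max (w a) (v a) := fun a => by simp [w']
  have hw'n : ∀ i ∉ S, w' i = w i := fun i hi => by simp [w', hi]
  have hμ'S : ∀ a : S, μ' a = some (g (τ a)) := fun a => by simp [μ']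
  have hμ'n : ∀ i ∉ S, μ' i = μ i := fun i hi => by simp [μ', hi]
  have hout : ∀ i ∉ S, ∀ a, μ i ≠ some (g a) := fun i hi a hia =>
    hi (hinj i a _ hia (hg a) ▸ a.2)
  have hww' : ∀ i, w i ≤ w' i := fun i => by
    by_cases hi : i ∈ S
    · exact (le_max_left _ _).trans (hw'S ⟨i, hi⟩).ge
    · exact (hw'n i hi).ge
  refine ⟨p', w', μ', ⟨?_, ?_, fun i => (hw i).trans (hww' i), ?_, ?_, ?_, ?_⟩, g l, ?_⟩
  · intro i i' j hi hi'
    by_cases h1 : i ∈ S <;> by_cases h2 : i' ∈ S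
    · lift i to S using h1
      lift i' to S using h2
      rw [hμ'S] at hi hi'
      rw [← hi', Option.some_inj] at hi
      exact congrArg _ (hτinj (hginj hi))
    · lift i to S using h1
      rw [hμ'S] at hi
      rw [hμ'n _ h2, ← hi] at hi'
      exact absurd hi' (hout _ h2 _)
    · lift i' to S using h2
      rw [hμ'S] at hi'
      rw [hμ'n _ h1, ← hi'] at hi
      exact absurd hi (hout _ h1 _)
    · rw [hμ'n _ h1] at hi
      rw [hμ'n _ h2] at hi'
      exact hinj _ _ _ hi hi'
  · intro j
    by_cases hj : ∃ a, g a = j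
    · obtain ⟨a, rfl⟩ := hj
      rw [hp'g]
      exact le_min (hp _) ((hr0 a).trans (hrx a))
    · rw [hp'n j hj]; exact hp j
  · intro i j hi
    by_cases h1 : i ∈ S
    · lift i to S using h1
      rw [hμ'S, Option.some_inj] at hi
      rw [← hi, hw'S, hp'g]
      by_cases hv : v i < w i
      · simp only [τ, hv, if_true]
        rw [max_eq_left hv.le, min_eq_left (hW i hv).le]
        exact hmatch _ _ (hg i)
      · simp only [τ, hv, if_false]
        rw [max_eq_right (not_lt.1 hv), min_eq_right (hnW i hv)]
    · rw [hμ'n _ h1] at hi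
      have hj : ¬ ∃ a, g a = j := by
        rintro ⟨a, rfl⟩
        exact hout i h1 a hi
      rw [hw'n i h1, hp'n j hj]
      exact hmatch i j hi
  · intro i j
    by_cases hj : ∃ a, g a = j
    · obtain ⟨a, rfl⟩ := hj
      rw [hp'g]
      by_cases h1 : i ∈ S
      · lift i to S using h1
        rw [hw'S]
        rcases min_choice (p (g a)) (x a) with hm | hm <;> rw [hm]
        · exact (hstab _ _).trans (le_max_left _ _)
        · exact (hx i a).trans (le_max_right _ _)
      · rw [hw'n i h1]
        exact ((M.anti i (g a)).antitone (le_min (hrp a).le (hrx a))).trans (hrout a i h1)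
    · rw [hp'n j hj]
      exact (hstab i j).trans (hww' i)
  · intro i hi
    by_cases h1 : i ∈ S
    · lift i to S using h1
      rw [hμ'S] at hi
      exact absurd hi (by simp)
    · rw [hμ'n i h1] at hi
      rw [hw'n i h1]
      exact hnone i hi
  · intro j hj
    have hj' : ¬ ∃ a, g a = j := by
      rintro ⟨a, rfl⟩
      obtain ⟨b, rfl⟩ := hτsurj a
      exact hj b (hμ'S b)
    rw [hp'n j hj']
    refine hunm j fun i hi => ?_
    by_cases h1 : i ∈ S
    · refine hj' ⟨⟨i, h1⟩, ?_⟩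
      have := hg ⟨i, h1⟩
      rw [hi, Option.some_inj] at this
      exact this.symm
    · exact hj i ((hμ'n i h1).trans hi)
  · rw [hp'g]
    exact (min_le_right _ _).trans_lt (hxl ▸ hrp l)

/-- A chain of minimal length joining two points visits no point twice. -/
lemma Relation.ReflTransGen.exists_injOn_chain {α : Type*} {R : α → α → Prop} {a e : α}
    (h : Relation.ReflTransGen R a e) :
    ∃ (m : ℕ) (b : ℕ → α), b 0 = a ∧ b m = e ∧ (∀ k < m, R (b k) (b (k + 1))) ∧
      Set.InjOn b (Set.Iic m) := by
  let P : ℕ → Prop := fun m => ∃ b : ℕ → α, b 0 = a ∧ b m = e ∧ ∀ k < m, R (b k) (b (k + 1))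
  have hP : ∃ m, P m := by
    induction h with
    | refl => exact ⟨0, fun _ => a, rfl, rfl, by simp⟩
    | @tail c d _ hcd ih =>
      obtain ⟨m, b, h0, hm, hR⟩ := ih
      refine ⟨m + 1, fun k => if k ≤ m then b k else d, by simpa using h0, by simp, fun k hk => ?_⟩
      rcases (Nat.lt_succ_iff.1 hk).lt_or_eq with hlt | rfl
      · simpa [hlt.le, Nat.succ_le_of_lt hlt] using hR k hlt
      · simpa [hm] using hcd
  obtain ⟨b, h0, hm, hR⟩ := Nat.find_spec hP
  refine ⟨Nat.find hP, b, h0, hm, hR, ?_⟩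
  have key : ∀ s t, s < t → t ≤ Nat.find hP → b s ≠ b t := by
    intro s t hst ht heq
    refine Nat.find_min hP (m := Nat.find hP - (t - s)) (by omega)
      ⟨fun k => if k ≤ s then b k else b (k + (t - s)), by simpa using h0, ?_, fun k hk => ?_⟩
    · by_cases h1 : Nat.find hP - (t - s) ≤ s
      · have h2 : Nat.find hP - (t - s) = s := by omega
        have h3 : Nat.find hP = t := by omega
        simp only [h2, le_refl, if_true]
        rw [heq, ← hm, ← h3]
      · simp only [h1, if_false]
        rw [← hm]
        congr 1
        omega
    · rcases lt_trichotomy k s with h1 | rfl | h1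
      · simpa [h1.le, Nat.succ_le_of_lt h1] using hR k (by omega)
      · have h2 := hR t (by omega)
        have h3 : k + 1 + (t - k) = t + 1 := by omega
        simpa [h3, heq] using h2
      · have h2 := hR (k + (t - s)) (by omega)
        have h3 : k + 1 + (t - s) = k + (t - s) + 1 := by omega
        simpa [h3, not_le.2 h1, not_le.2 (h1.trans (Nat.lt_succ_self k))] using h2
  intro s hs t ht heq
  rcases lt_trichotomy s t with h1 | h1 | h1
  · exact absurd heq (key s t h1 ht)
  · exact h1
  · exact absurd heq.symm (key t s h1 hs)

/-- Critical alternating path at the lowest equilibrium: for every buyer `i`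
there is a tight alternating path (starting at `i` with a matching edge, or of
length 0) ending at an unmatched buyer or at a good with price `0`. -/
theorem critical_path_lowest {I J : Type} [Fintype I] [Fintype J] (M : Market I J)
    (p : J → ℝ) (w : I → ℝ) (μ : I → Option J) (h : IsLowest M p w μ) (i : I) :
    -- either a path i = b 0, g 0, b 1, g 1, ..., b m with `b m` unmatched
    (∃ (m : ℕ) (b : Fin (m+1) → I) (g : Fin m → J),
      b 0 = i ∧ Function.Injective b ∧ Function.Injective g ∧
      (∀ k : Fin m, μ (b k.castSucc) = some (g k)) ∧
      (∀ k : Fin m, w (b k.succ) = M.u (b k.succ) (g k) (p (g k))) ∧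
      μ (b (Fin.last m)) = none) ∨
    -- or a path i = b 0, g 0, b 1, g 1, ..., b m, g m with `p (g m) = 0`
    (∃ (m : ℕ) (b : Fin (m+1) → I) (g : Fin (m+1) → J),
      b 0 = i ∧ Function.Injective b ∧ Function.Injective g ∧
      (∀ k : Fin (m+1), μ (b k) = some (g k)) ∧
      (∀ k : Fin m, w (b k.succ) = M.u (b k.succ) (g k.castSucc) (p (g k.castSucc))) ∧
      p (g (Fin.last m)) = 0) := by
  let R : I → I → Prop := fun a b => ∃ j, μ a = some j ∧ w b = M.u b j (p j)
  obtain ⟨e, hreach, hend⟩ : ∃ e, Relation.ReflTransGen R i e ∧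
      (μ e = none ∨ ∃ j, μ e = some j ∧ p j = 0) := by
    by_contra! hcon
    let S : Set I := {e | Relation.ReflTransGen R i e}
    have hgex : ∀ a : S, ∃ j, μ a = some j := fun a =>
      Option.ne_none_iff_exists'.1 (hcon a a.2).1
    choose g hg using hgex
    obtain ⟨p', w', μ', h', j, hj⟩ := h.1.exists_price_lt_s8 S ⟨i, Relation.ReflTransGen.refl⟩ g hg
      (fun a => lt_of_le_of_ne (h.1.2.1 _) ((hcon a a.2).2 _ (hg a)).symm)
      (fun b hb a hba => hb (Relation.ReflTransGen.tail a.2 ⟨g a, hg a, hba⟩))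
    exact absurd (h.2 p' w' μ' h' j) (not_le.2 hj)
  obtain ⟨m, b, h0, hm, hR, hbinj⟩ := hreach.exists_injOn_chain
  have hbinj' : Function.Injective fun k : Fin (m + 1) => b k := fun s t hst =>
    Fin.ext (hbinj (Nat.lt_succ_iff.1 s.2) (Nat.lt_succ_iff.1 t.2) hst)
  choose g hg ht using hR
  rcases hend with hend | ⟨j, hej, hpj⟩
  · refine Or.inl ⟨m, fun k => b k, fun k => g k k.2, h0, hbinj', fun s t hst => ?_,
      fun k => hg k k.2, fun k => ht k k.2, by simpa [hm] using hend⟩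
    refine Fin.ext (hbinj s.2.le t.2.le (h.1.1 _ _ (g s s.2) (hg s s.2) ?_))
    exact (hg t t.2).trans (congrArg some hst.symm)
  · let g' : ℕ → J := fun k => if hk : k < m then g k hk else j
    have hg' : ∀ k : Fin (m + 1), μ (b k) = some (g' k) := fun k => by
      by_cases hk : (k : ℕ) < m
      · simpa [g', hk] using hg k hk
      · have hkm : (k : ℕ) = m := by omega
        simp [g', hkm, hm, hej]
    refine Or.inr ⟨m, fun k => b k, fun k => g' k, h0, hbinj', fun s t hst => ?_,
      hg', fun k => ?_, by simpa [g'] using hpj⟩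
    · exact hbinj' (h.1.1 _ _ (g' s) (hg' s) ((hg' t).trans (congrArg some hst.symm)))
    · simpa [g', k.2] using ht k k.2
end

section
/- (Inductive characterization of the lowest-equilibrium payoff) Let M be a unit-demand market, i a buyer, and let W̄_{-i} denote the highest competitive equilibrium of the market M_{-i} obtained by removing buyer i. Then the payoff of buyer i at the lowest competitive equilibrium of M equals her best achievable payoff at the prices of W̄_{-i}: u_i(W_low) = max({u_i^j(p^j(W̄_{-i})) : j ∈ J} ∪ {0}). -/
attribute [local instance] Classical.propDecidable

/-- The market with buyer `i0` removed. -/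
def Market.removeBuyer {I J : Type} [Fintype I] [Fintype J] [DecidableEq I]
    (M : Market I J) (i0 : I) : Market {i : I // i ≠ i0} J where
  u := fun i j => M.u i.1 j
  cont := fun i j => M.cont i.1 j
  anti := fun i j => M.anti i.1 j
  surj := fun i j => M.surj i.1 j
  evNonpos := fun i j => M.evNonpos i.1 j

/-- The market with good `j0` removed. -/
def Market.removeGood {I J : Type} [Fintype I] [Fintype J] [DecidableEq J]
    (M : Market I J) (j0 : J) : Market I {j : J // j ≠ j0} where
  u := fun i j => M.u i j.1
  cont := fun i j => M.cont i j.1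
  anti := fun i j => M.anti i j.1
  surj := fun i j => M.surj i j.1
  evNonpos := fun i j => M.evNonpos i j.1

/-- An intermediate state of the ascending auction with increment `δ`: matched buyers are content
up to one increment and unmatched goods are free, but unmatched buyers may still wish to bid. -/
def IsAuctionState {I J : Type} [Fintype I] [Fintype J] (M : Market I J) (δ : ℝ)
    (p : J → ℝ) (μ : I → Option J) : Prop :=
  (∀ i i' j, μ i = some j → μ i' = some j → i = i') ∧
  (∀ j, 0 ≤ p j) ∧
  (∀ i j, μ i = some j → 0 ≤ M.u i j (p j)) ∧
  (∀ i j j', μ i = some j → M.u i j' (p j' + δ) ≤ M.u i j (p j)) ∧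
  (∀ j, (∀ i, μ i ≠ some j) → p j = 0)

/-- No unmatched buyer wishes to bid one more increment. -/
def IsFinal {I J : Type} [Fintype I] [Fintype J] (M : Market I J) (δ : ℝ)
    (p : J → ℝ) (μ : I → Option J) : Prop :=
  ∀ i j, μ i = none → M.u i j (p j + δ) ≤ 0

section Existence

variable {I J : Type} [Fintype I] [Fintype J]

lemma IsAuctionState.mono {M : Market I J} {δ δ' : ℝ} (h : δ ≤ δ') {p : J → ℝ}
    {μ : I → Option J} (hs : IsAuctionState M δ p μ) : IsAuctionState M δ' p μ := by
  obtain ⟨h1, h2, h3, h4, h5⟩ := hs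
  exact ⟨h1, h2, h3, fun i j j' hij =>
    ((M.anti i j').antitone (by linarith)).trans (h4 i j j' hij), h5⟩

lemma IsFinal.mono {M : Market I J} {δ δ' : ℝ} (h : δ ≤ δ') {p : J → ℝ}
    {μ : I → Option J} (hs : IsFinal M δ p μ) : IsFinal M δ' p μ := fun i j hi =>
  ((M.anti i j).antitone (by linarith)).trans (hs i j hi)

lemma exists_price_bound_s9 (M : Market I J) :
    ∃ B : ℝ, ∀ δ p μ, IsAuctionState M δ p μ → ∀ j, p j ≤ B := by
  choose z hz using fun i j => M.surj i j 0
  refine ⟨∑ i, ∑ j, |z i j|, fun δ p μ ⟨_, _, h3, _, h5⟩ j => ?_⟩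
  by_cases hj : ∀ i, μ i ≠ some j
  · rw [h5 j hj]
    positivity
  · push Not at hj
    obtain ⟨i, hi⟩ := hj
    have h1 : p j ≤ z i j := by
      have := h3 i j hi
      rw [← hz i j] at this
      exact (M.anti i j).le_iff_ge.1 this
    calc p j ≤ |z i j| := h1.trans (le_abs_self _)
      _ ≤ ∑ j, |z i j| :=
        Finset.single_le_sum (f := fun j => |z i j|) (fun _ _ => abs_nonneg _) (Finset.mem_univ j)
      _ ≤ ∑ i, ∑ j, |z i j| :=
        Finset.single_le_sum (f := fun i => ∑ j, |z i j|)
          (fun _ _ => Finset.sum_nonneg fun _ _ => abs_nonneg _) (Finset.mem_univ i)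

/-- As long as some unmatched buyer wishes to bid, the auction can proceed by one increment. -/
lemma IsAuctionState.exists_step {M : Market I J} {δ : ℝ} (hδ : 0 < δ) {p : J → ℝ}
    {μ : I → Option J} (hs : IsAuctionState M δ p μ) (hf : ¬ IsFinal M δ p μ) :
    ∃ p' μ', IsAuctionState M δ p' μ' ∧ ∑ j, p' j = ∑ j, p j + δ := by
  obtain ⟨h1, h2, h3, h4, h5⟩ := hs
  unfold IsFinal at hf
  push Not at hf
  obtain ⟨i, j₀, hi, hpos⟩ := hf
  obtain ⟨j, -, hj⟩ := Finset.exists_max_image Finset.univ (fun j => M.u i j (p j + δ))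
    ⟨j₀, Finset.mem_univ _⟩
  have hj' : ∀ k, M.u i k (p k + δ) ≤ M.u i j (p j + δ) := fun k => hj k (Finset.mem_univ _)
  set p' := Function.update p j (p j + δ) with hp'
  set μ' : I → Option J :=
    fun k => if k = i then some j else if μ k = some j then none else μ k with hμ'
  have hpj : p' j = p j + δ := by simp [hp']
  have hpk : ∀ k, k ≠ j → p' k = p k := fun k hk => by simp [hp', hk]
  have hple : ∀ k, p k ≤ p' k := fun k => by
    by_cases hk : k = j
    · subst hk; rw [hpj]; linarith
    · rw [hpk k hk]
  have hμ : ∀ k l, μ' k = some l → (k = i ∧ l = j) ∨ (k ≠ i ∧ l ≠ j ∧ μ k = some l) := by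
    intro k l hkl
    simp only [hμ'] at hkl
    grind
  refine ⟨p', μ', ⟨?_, fun k => (h2 k).trans (hple k), ?_, ?_, ?_⟩, ?_⟩
  · intro k k' l hk hk'
    rcases hμ k l hk with ⟨a, b⟩ | ⟨a, b, c⟩ <;> rcases hμ k' l hk' with ⟨a', b'⟩ | ⟨a', b', c'⟩
    · rw [a, a']
    · exact absurd b b'
    · exact absurd b' b
    · exact h1 _ _ _ c c'
  · intro k l hk
    rcases hμ k l hk with ⟨rfl, rfl⟩ | ⟨a, b, c⟩
    · rw [hpj]; exact (hpos.le.trans (hj' j₀))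
    · rw [hpk l b]; exact h3 k l c
  · intro k l l' hk
    have hle : M.u k l' (p' l' + δ) ≤ M.u k l' (p l' + δ) :=
      (M.anti k l').antitone (by linarith [hple l'])
    rcases hμ k l hk with ⟨rfl, rfl⟩ | ⟨a, b, c⟩
    · rw [hpj]; exact hle.trans (hj' l')
    · rw [hpk l b]; exact hle.trans (h4 k l l' c)
  · intro l hl
    have hlj : l ≠ j := by
      rintro rfl
      exact hl i (by simp [hμ'])
    rw [hpk l hlj]
    refine h5 l fun k hk => hl k ?_
    simp only [hμ']
    grind
  · rw [hp', Finset.sum_update_of_mem (Finset.mem_univ j),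
      ← Finset.add_sum_erase Finset.univ p (Finset.mem_univ j), Finset.sdiff_singleton_eq_erase]
    ring

lemma exists_final_state (M : Market I J) {δ : ℝ} (hδ : 0 < δ) :
    ∃ p μ, IsAuctionState M δ p μ ∧ IsFinal M δ p μ := by
  by_contra! hcon
  have hgrow : ∀ n : ℕ, ∃ p μ, IsAuctionState M δ p μ ∧ ∑ j, p j = n * δ := by
    intro n
    induction n with
    | zero => exact ⟨fun _ => 0, fun _ => none, by simp [IsAuctionState], by simp⟩
    | succ n ih =>
      obtain ⟨p, μ, hs, hsum⟩ := ih
      obtain ⟨p', μ', hs', hsum'⟩ := hs.exists_step hδ (hcon p μ hs)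
      exact ⟨p', μ', hs', by rw [hsum', hsum]; push_cast; ring⟩
  obtain ⟨B, hB⟩ := exists_price_bound_s9 M
  obtain ⟨n, hn⟩ := exists_nat_gt ((∑ _j : J, B) / δ)
  obtain ⟨p, μ, hs, hsum⟩ := hgrow n
  have h1 : ∑ j, p j ≤ ∑ _j : J, B := Finset.sum_le_sum fun j _ => hB δ p μ hs j
  rw [div_lt_iff₀ hδ] at hn
  linarith

/-- A single matching is final for arbitrarily small increments. -/
lemma exists_uniform_matching (M : Market I J) :
    ∃ μ : I → Option J, ∀ δ > 0, ∃ p, IsAuctionState M δ p μ ∧ IsFinal M δ p μ := by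
  by_contra! hcon
  choose d hd hd' using hcon
  obtain ⟨μ₀, -, hμ₀⟩ := Finset.exists_min_image Finset.univ d ⟨fun _ => none, Finset.mem_univ _⟩
  obtain ⟨p, μ, hs, hf⟩ := exists_final_state M (hd μ₀)
  have hle := hμ₀ μ (Finset.mem_univ _)
  exact hd' μ p (hs.mono hle) (hf.mono hle)

theorem exists_isEquilib (M : Market I J) : ∃ p w μ, IsEquilib M p w μ := by
  obtain ⟨μ, hμ⟩ := exists_uniform_matching M
  obtain ⟨B, hB⟩ := exists_price_bound_s9 M
  choose P hs hf using fun n : ℕ => hμ (1 / ((n : ℝ) + 1)) (by positivity)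
  have hmem : ∀ n, P n ∈ Set.Icc (fun _ : J => (0 : ℝ)) (fun _ => B) := fun n =>
    ⟨(hs n).2.1, hB _ _ _ (hs n)⟩
  obtain ⟨p, -, φ, hφ, hlim⟩ := (isCompact_Icc).tendsto_subseq hmem
  have hlimj : ∀ j, Filter.Tendsto (fun n => P (φ n) j) Filter.atTop (nhds (p j)) := fun j =>
    tendsto_pi_nhds.1 hlim j
  have hd : Filter.Tendsto (fun n => 1 / ((φ n : ℝ) + 1)) Filter.atTop (nhds 0) :=
    tendsto_one_div_add_atTop_nhds_zero_nat.comp hφ.tendsto_atTop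
  have hu : ∀ i j, Filter.Tendsto (fun n => M.u i j (P (φ n) j)) Filter.atTop
      (nhds (M.u i j (p j))) := fun i j => ((M.cont i j).tendsto _).comp (hlimj j)
  have hud : ∀ i j, Filter.Tendsto (fun n => M.u i j (P (φ n) j + 1 / ((φ n : ℝ) + 1)))
      Filter.atTop (nhds (M.u i j (p j))) := fun i j => by
    have := (hlimj j).add hd
    rw [add_zero] at this
    exact ((M.cont i j).tendsto _).comp this
  have hwnn : ∀ i j, μ i = some j → 0 ≤ M.u i j (p j) := fun i j hij =>
    ge_of_tendsto' (hu i j) fun n => (hs (φ n)).2.2.1 i j hij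
  refine ⟨p, fun i => (μ i).elim 0 fun j => M.u i j (p j), μ, (hs 0).1,
    fun j => ge_of_tendsto' (hlimj j) fun n => (hs (φ n)).2.1 j, ?_, ?_, ?_, ?_, ?_⟩
  · intro i
    rcases hi : μ i with _ | j
    · simp [hi]
    · simpa [hi] using hwnn i j hi
  · intro i j hij
    simp [hij]
  · intro i j
    rcases hi : μ i with _ | k
    · simpa [hi] using le_of_tendsto' (hud i j) fun n => hf (φ n) i j hi
    · simpa [hi] using le_of_tendsto_of_tendsto' (hud i j) (hu i k)
        fun n => (hs (φ n)).2.2.2.1 i k j hi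
  · intro i hi
    simp [hi]
  · intro j hj
    exact tendsto_nhds_unique (hlimj j)
      (tendsto_const_nhds.congr fun n => ((hs (φ n)).2.2.2.2 j hj).symm)

/-- The market in which good `j` costs `r j` more than its quoted price. -/
def Market.shift (M : Market I J) (r : J → ℝ) : Market I J where
  u := fun i j x => M.u i j (x + r j)
  cont := fun i j => (M.cont i j).comp (by fun_prop)
  anti := fun i j _ _ h => M.anti i j (by simpa using h)
  surj := fun i j y => by
    obtain ⟨x, hx⟩ := M.surj i j y
    exact ⟨x - r j, by simpa using hx⟩
  evNonpos := fun i j => by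
    obtain ⟨x, hx⟩ := M.evNonpos i j
    exact ⟨x - r j, fun y hy => hx _ (by linarith)⟩

/-- Competitive equilibria exist for arbitrary reserve prices `r`. -/
lemma exists_reserve_equilib (M : Market I J) (r : J → ℝ) :
    ∃ (q : J → ℝ) (w : I → ℝ) (μ : I → Option J),
      (∀ i i' j, μ i = some j → μ i' = some j → i = i') ∧
      (∀ j, r j ≤ q j) ∧ (∀ i, 0 ≤ w i) ∧
      (∀ i j, μ i = some j → w i = M.u i j (q j)) ∧
      (∀ i j, M.u i j (q j) ≤ w i) ∧
      (∀ i, μ i = none → w i = 0) ∧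
      (∀ j, (∀ i, μ i ≠ some j) → q j = r j) := by
  obtain ⟨p, w, μ, h1, h2, h3, h4, h5, h6, h7⟩ := exists_isEquilib (M.shift r)
  exact ⟨fun j => p j + r j, w, μ, h1, fun j => by linarith [h2 j], h3, h4, h5, h6,
    fun j hj => by simp [h7 j hj]⟩

end Existence

section InducedPayoff

variable {I J : Type} [Fintype I] [Fintype J] (M : Market I J) (p : J → ℝ) (i : I)

lemma inducedPayoff_nonneg : 0 ≤ inducedPayoff M p i :=
  Finset.le_max' _ _ (by simp)

lemma le_inducedPayoff (j : J) : M.u i j (p j) ≤ inducedPayoff M p i :=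
  Finset.le_max' _ _ (by simp)

lemma inducedPayoff_eq_zero_or : inducedPayoff M p i = 0 ∨
    ∃ j, M.u i j (p j) = inducedPayoff M p i := by
  have := Finset.max'_mem (insert (0 : ℝ) (Finset.univ.image fun j => M.u i j (p j)))
    (Finset.insert_nonempty _ _)
  simpa [inducedPayoff] using this

end InducedPayoff

section Comparison

variable {I J : Type} [Fintype I] [Fintype J] [DecidableEq I] {M : Market I J} {i0 : I}

lemma payoff_le_inducedPayoff {p : J → ℝ} {w : I → ℝ} {μ : I → Option J}
    (h : IsEquilib M p w μ) {pb : J → ℝ} {wb : {i : I // i ≠ i0} → ℝ}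
    {μb : {i : I // i ≠ i0} → Option J} (hb : IsEquilib (M.removeBuyer i0) pb wb μb) :
    w i0 ≤ inducedPayoff M pb i0 := by
  by_contra! hlt
  obtain ⟨h1, h2, h3, h4, h5, h6, h7⟩ := h
  obtain ⟨b1, b2, b3, b4, b5, b6, b7⟩ := hb
  set G : Finset J := {j | p j < pb j} with hG
  set A : Finset {i : I // i ≠ i0} := {i | wb i < w i} with hA
  set A' : Finset I := insert i0 (A.map (Function.Embedding.subtype _)) with hA'
  have hcard : A'.card = A.card + 1 := by
    rw [hA', Finset.card_insert_of_notMem (by simp), Finset.card_map]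
  have hmatch : ∀ i x, 0 ≤ x → x < w i → (∀ j, M.u i j (pb j) ≤ x) →
      ∃ j ∈ G, μ i = some j := by
    intro i x hx hxw hj
    rcases hi : μ i with _ | j
    · exact absurd (h6 i hi) (by linarith)
    · refine ⟨j, ?_, rfl⟩
      have := hj j
      rw [hG, Finset.mem_filter]
      refine ⟨Finset.mem_univ _, (M.anti i j).lt_iff_gt.1 ?_⟩
      rw [← h4 i j hi]
      linarith
  have hA'G : A'.card ≤ G.card := by
    refine Finset.card_le_card_of_forall_subsingleton (fun i j => μ i = some j) ?_ ?_
    · intro i hi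
      rcases Finset.mem_insert.1 hi with rfl | hi
      · exact hmatch i _ (inducedPayoff_nonneg M pb i) hlt (le_inducedPayoff M pb i)
      · obtain ⟨k, hk, rfl⟩ := Finset.mem_map.1 hi
        exact hmatch _ _ (b3 k) (by simpa [hA] using hk) (b5 k)
    · intro j _ i hi i' hi'
      exact h1 i i' j hi.2 hi'.2
  have hGA : G.card ≤ A.card := by
    refine Finset.card_le_card_of_forall_subsingleton (fun j i => μb i = some j) ?_ ?_
    · intro j hj
      have hj : p j < pb j := by simpa [hG] using hj
      have : ∃ i, μb i = some j := by
        by_contra! hno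
        linarith [b7 j hno, h2 j]
      obtain ⟨i, hi⟩ := this
      refine ⟨i, ?_, hi⟩
      have e1 := b4 i j hi
      have e2 : M.u i j (pb j) < M.u i j (p j) := M.anti i j hj
      have e3 := h5 i j
      rw [hA, Finset.mem_filter]
      exact ⟨Finset.mem_univ _, by rw [e1]; exact e2.trans_le e3⟩
    · intro i _ j hj j' hj'
      exact Option.some_injective _ (hj.2.symm.trans hj'.2)
  omega

lemma inducedPayoff_le_payoff {p : J → ℝ} {w : I → ℝ} {μ : I → Option J}
    (h : IsLowest M p w μ) {pb : J → ℝ} {wb : {i : I // i ≠ i0} → ℝ}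
    {μb : {i : I // i ≠ i0} → Option J} (hb : IsHighest (M.removeBuyer i0) pb wb μb) :
    inducedPayoff M pb i0 ≤ w i0 := by
  by_contra! hlt
  obtain ⟨⟨h1, h2, h3, h4, h5, h6, h7⟩, hmin⟩ := h
  obtain ⟨v, hv, hv'⟩ := exists_between hlt
  have hvpos : 0 < v := (h3 i0).trans_lt hv
  obtain ⟨s₀, hs₀⟩ : ∃ j, M.u i0 j (pb j) = inducedPayoff M pb i0 :=
    (inducedPayoff_eq_zero_or M pb i0).resolve_left (by linarith)
  choose x hx using fun j => M.surj i0 j v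
  obtain ⟨q, wq, μq, q1, q2, q3, q4, q5, q6, q7⟩ :=
    exists_reserve_equilib (M.removeBuyer i0) fun j => max 0 (x j)
  have hq0 : ∀ j, 0 ≤ q j := fun j => (le_max_left _ _).trans (q2 j)
  have hqx : ∀ j, x j ≤ q j := fun j => (le_max_right _ _).trans (q2 j)
  have hqv : ∀ j, M.u i0 j (q j) ≤ v := fun j => by
    rw [← hx j]; exact (M.anti i0 j).antitone (hqx j)
  -- Otherwise `q` would be an equilibrium of the reduced market above its highest one.
  obtain ⟨s, hsun, hsx⟩ : ∃ s, (∀ i, μq i ≠ some s) ∧ q s = x s := by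
    by_contra! hno
    have hE : IsEquilib (M.removeBuyer i0) q wq μq := by
      refine ⟨q1, hq0, q3, q4, q5, q6, fun j hj => ?_⟩
      have e1 := q7 j hj
      have e2 := hno j hj
      rcases max_choice 0 (x j) with e | e
      · rw [e1, e]
      · exact absurd (e1.trans e) e2
    have e1 := hb.2 q wq μq hE s₀
    have e2 := (M.anti i0 s₀).antitone e1
    linarith [hqv s₀]
  have hsv : M.u i0 s (q s) = v := by rw [hsx, hx]
  set G : Finset J := {j | q j < p j} with hG
  set A : Finset {i : I // i ≠ i0} := {i | w i < wq i} with hA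
  set A' : Finset I := insert i0 (A.map (Function.Embedding.subtype _)) with hA'
  have memG : ∀ j, j ∈ G ↔ q j < p j := fun j => by simp [hG]
  have memA : ∀ i, i ∈ A ↔ w i < wq i := fun j => by simp [hA]
  have memA' : ∀ i : {i : I // i ≠ i0}, (i : I) ∈ A' ↔ w i < wq i := fun i => by
    simp [hA', memA, i.2]
  have hi0A' : i0 ∈ A' := Finset.mem_insert_self _ _
  have hcard : A'.card = A.card + 1 := by
    rw [hA', Finset.card_insert_of_notMem (by simp), Finset.card_map]
  have hsG : s ∈ G := by
    rw [memG]
    refine (M.anti i0 s).lt_iff_gt.1 ?_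
    linarith [h5 i0 s]
  have hAG : ∀ i ∈ A, ∃ j ∈ G.erase s, μq i = some j := by
    intro i hi
    rw [memA] at hi
    rcases hm : μq i with _ | j
    · linarith [q6 i hm, h3 i]
    · refine ⟨j, Finset.mem_erase.2 ⟨?_, ?_⟩, rfl⟩
      · rintro rfl
        exact hsun i hm
      · rw [memG]
        refine (M.anti i j).lt_iff_gt.1 ?_
        have e1 : wq i = M.u i j (q j) := q4 i j hm
        linarith [h5 i j]
  have hGA : ∀ j ∈ G, ∃ i ∈ A', μ i = some j := by
    intro j hj
    rw [memG] at hj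
    obtain ⟨i, hi⟩ : ∃ i, μ i = some j := by
      by_contra! hno
      linarith [h7 j hno, hq0 j]
    refine ⟨i, ?_, hi⟩
    by_cases hii : i = i0
    · rw [hii]; exact hi0A'
    · rw [memA' ⟨i, hii⟩]
      have e1 : M.u i j (q j) ≤ wq ⟨i, hii⟩ := q5 ⟨i, hii⟩ j
      have e2 := M.anti i j hj
      change w i < _
      rw [h4 i j hi]
      exact e2.trans_le e1
  have cardG : (G.erase s).card + 1 = G.card := Finset.card_erase_add_one hsG
  have card1 : A.card ≤ (G.erase s).card :=
    Finset.card_le_card_of_forall_subsingleton (fun i j => μq i = some j) hAG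
      fun j _ i hi i' hi' => q1 i i' j hi.2 hi'.2
  have card2 : G.card ≤ A'.card :=
    Finset.card_le_card_of_forall_subsingleton (fun j i => μ i = some j) hGA
      fun i _ j hj j' hj' => Option.some_injective _ (hj.2.symm.trans hj'.2)
  have hGsurj : ∀ j ∈ G, j ≠ s → ∃ i ∈ A, μq i = some j := by
    intro j hj hjs
    by_contra! hno
    have hj' : j ∈ G.erase s := Finset.mem_erase.2 ⟨hjs, hj⟩
    have : A.card ≤ ((G.erase s).erase j).card := by
      refine Finset.card_le_card_of_forall_subsingleton (fun i j => μq i = some j) ?_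
        fun j _ i hi i' hi' => q1 i i' j hi.2 hi'.2
      intro i hi
      obtain ⟨k, hk, hik⟩ := hAG i hi
      exact ⟨k, Finset.mem_erase.2 ⟨by rintro rfl; exact hno i hi hik, hk⟩, hik⟩
    have := Finset.card_erase_add_one hj'
    omega
  have hA'surj : ∀ i ∈ A', ∃ j ∈ G, μ i = some j := by
    intro i hi
    by_contra! hno
    have : G.card ≤ (A'.erase i).card := by
      refine Finset.card_le_card_of_forall_subsingleton (fun j i => μ i = some j) ?_
        fun i _ j hj j' hj' => Option.some_injective _ (hj.2.symm.trans hj'.2)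
      intro j hj
      obtain ⟨k, hk, hkj⟩ := hGA j hj
      exact ⟨k, Finset.mem_erase.2 ⟨by rintro rfl; exact hno j hj hkj, hk⟩, hkj⟩
    have := Finset.card_erase_add_one hi
    omega
  set μ' : I → Option J := fun i =>
    if hi : i = i0 then some s else if w i < wq ⟨i, hi⟩ then μq ⟨i, hi⟩ else μ i with hμ'
  set w' : I → ℝ := fun i => if hi : i = i0 then v else max (w i) (wq ⟨i, hi⟩) with hw'
  have hμ0 : μ' i0 = some s := by simp [hμ']
  have hμA : ∀ i : {i : I // i ≠ i0}, w i < wq i → μ' i = μq i := fun i hi => by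
    simp [hμ', i.2, hi]
  have hμB : ∀ i : {i : I // i ≠ i0}, ¬ w i < wq i → μ' i = μ i := fun i hi => by
    simp only [hμ', dif_neg i.2, if_neg hi]
  have hw0 : w' i0 = v := by simp [hw']
  have hwi : ∀ i : {i : I // i ≠ i0}, w' i = max (w i) (wq i) := fun i => by
    simp [hw', i.2]
  have key : ∀ i j, μ' i = some j → (i = i0 ∧ j = s) ∨
      (∃ k : {i : I // i ≠ i0}, (k : I) = i ∧ w k < wq k ∧ μq k = some j ∧ j ∈ G ∧ j ≠ s) ∨
      (∃ k : {i : I // i ≠ i0}, (k : I) = i ∧ wq k ≤ w k ∧ μ i = some j ∧ j ∉ G) := by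
    intro i j hij
    by_cases hi : i = i0
    · subst hi
      exact Or.inl ⟨rfl, Option.some_injective _ (hij.symm.trans hμ0)⟩
    right
    by_cases hlt : w i < wq ⟨i, hi⟩
    · left
      rw [hμA ⟨i, hi⟩ hlt] at hij
      obtain ⟨k, hk, hik⟩ := hAG ⟨i, hi⟩ ((memA _).2 hlt)
      obtain rfl := Option.some_injective _ (hij.symm.trans hik)
      exact ⟨⟨i, hi⟩, rfl, hlt, hij, Finset.mem_of_mem_erase hk, Finset.ne_of_mem_erase hk⟩
    · right
      rw [hμB ⟨i, hi⟩ hlt] at hij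
      refine ⟨⟨i, hi⟩, rfl, not_lt.1 hlt, hij, fun hj => ?_⟩
      obtain ⟨k, hk, hkj⟩ := hGA j hj
      obtain rfl := h1 _ _ _ hij hkj
      exact hlt ((memA' ⟨i, hi⟩).1 hk)
  have hE : IsEquilib M (fun j => min (p j) (q j)) w' μ' := by
    refine ⟨?_, fun j => le_min (h2 j) (hq0 j), ?_, ?_, ?_, ?_, ?_⟩
    · intro i i' j hi hi'
      rcases key i j hi with ⟨a, b⟩ | ⟨k, rfl, a, b, c, d⟩ | ⟨k, rfl, a, b, c⟩ <;>
      rcases key i' j hi' with ⟨a', b'⟩ | ⟨k', rfl, a', b', c', d'⟩ | ⟨k', rfl, a', b', c'⟩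
      · rw [a, a']
      · exact absurd b d'
      · exact absurd (b ▸ hsG) c'
      · exact absurd b' d
      · rw [q1 _ _ _ b b']
      · exact absurd c c'
      · exact absurd (b' ▸ hsG) c
      · exact absurd c' c
      · exact h1 _ _ _ b b'
    · intro i
      by_cases hi : i = i0
      · rw [hi, hw0]; exact hvpos.le
      · rw [hwi ⟨i, hi⟩]; exact (h3 i).trans (le_max_left _ _)
    · intro i j hij
      change w' i = M.u i j (min (p j) (q j))
      rcases key i j hij with ⟨rfl, rfl⟩ | ⟨k, rfl, a, b, c, d⟩ | ⟨k, rfl, a, b, c⟩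
      · rw [hw0, min_eq_right ((memG _).1 hsG).le, hsv]
      · rw [hwi k, max_eq_right a.le, min_eq_right ((memG _).1 c).le]
        exact q4 k j b
      · rw [memG, not_lt] at c
        rw [hwi k, max_eq_left a, min_eq_left c]
        exact h4 k j b
    · intro i j
      rw [(M.anti i j).antitone.map_min]
      by_cases hi : i = i0
      · subst hi
        rw [hw0]
        exact max_le ((h5 i j).trans hv.le) (hqv j)
      · rw [hwi ⟨i, hi⟩]
        exact max_le_max (h5 i j) (q5 ⟨i, hi⟩ j)
    · intro i hi
      by_cases hii : i = i0
      · rw [hii, hμ0] at hi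
        exact absurd hi (by simp)
      · by_cases hlt : w i < wq ⟨i, hii⟩
        · rw [hμA ⟨i, hii⟩ hlt] at hi
          linarith [q6 _ hi, h3 i]
        · rw [hμB ⟨i, hii⟩ hlt] at hi
          rw [hwi ⟨i, hii⟩, max_eq_left (not_lt.1 hlt)]
          exact h6 i hi
    · intro j hj
      have hjG : j ∉ G := by
        intro hjG
        by_cases hjs : j = s
        · exact hj i0 (by rw [hμ0, hjs])
        · obtain ⟨i, hi, hij⟩ := hGsurj j hjG hjs
          exact hj i (by rw [hμA i ((memA i).1 hi), hij])
      have hpj : p j = 0 := by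
        refine h7 j fun i hi => ?_
        have hiA : i ∉ A' := fun hiA => by
          obtain ⟨k, hk, hik⟩ := hA'surj i hiA
          exact hjG (Option.some_injective _ (hi.symm.trans hik) ▸ hk)
        have hii : i ≠ i0 := fun hii => hiA (hii ▸ hi0A')
        exact hj i (by rw [hμB ⟨i, hii⟩ fun hlt => hiA ((memA' ⟨i, hii⟩).2 hlt), hi])
      simp only [hpj]
      exact min_eq_left (hq0 j)
  have e1 := hmin _ _ _ hE s
  exact absurd (e1.trans (min_le_right _ _)) (not_le.2 ((memG s).1 hsG))

end Comparison

/-- Inductive characterization of the lowest-equilibrium payoff: the payoff of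
buyer `i0` at the lowest equilibrium of `M` equals her best achievable payoff
at the prices of the highest equilibrium of `M` without buyer `i0`. -/
theorem lowest_payoff_inductive {I J : Type} [Fintype I] [Fintype J] [DecidableEq I]
    (M : Market I J) (i0 : I)
    (p : J → ℝ) (w : I → ℝ) (μ : I → Option J) (hlow : IsLowest M p w μ)
    (pb : J → ℝ) (wb : {i : I // i ≠ i0} → ℝ) (μb : {i : I // i ≠ i0} → Option J)
    (hhigh : IsHighest (M.removeBuyer i0) pb wb μb) :
    w i0 = inducedPayoff M pb i0 := by
  exact le_antisymm (payoff_le_inducedPayoff hlow.1 hhigh.1)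
    (inducedPayoff_le_payoff hlow hhigh)
end

section
/- (Inductive characterization of the highest-equilibrium price) Let M be a unit-demand market, j a good, and let W_low^{-j} denote the lowest competitive equilibrium of the market M^{-j} obtained by removing good j. Then the price of good j at the highest competitive equilibrium of M equals the induced price p^j(u(W_low^{-j})) = max({p_i^j(u_i(W_low^{-j})) : i ∈ I} ∪ {0}), where p_i^j is the inverse of u_i^j. -/
attribute [local instance] Classical.propDecidable

section Existence

variable {I J : Type} [Fintype I] [Fintype J]

/-- A state of the ascending auction with increment `ε` and reserve prices `r`: sold goods give
their buyers a nonnegative payoff that no good beats once its price is raised by `ε`, and unsold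
goods are at their reserve price. -/
structure AuctionState (M : Market I J) (r : J → ℝ) (ε : ℝ) (p : J → ℝ)
    (μ : I → Option J) : Prop where
  inj : ∀ i i' j, μ i = some j → μ i' = some j → i = i'
  reserve_le : ∀ j, r j ≤ p j
  nonneg : ∀ i j, μ i = some j → 0 ≤ M.u i j (p j)
  almost_best : ∀ i j, μ i = some j → ∀ j', M.u i j' (p j' + ε) ≤ M.u i j (p j)
  unsold : ∀ j, (∀ i, μ i ≠ some j) → p j = r j

namespace AuctionState

/-- No unmatched buyer gains from bidding `ε` above the current prices. -/
def Terminal (M : Market I J) (ε : ℝ) (p : J → ℝ) (μ : I → Option J) : Prop :=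
  ∀ i, μ i = none → ∀ j, M.u i j (p j + ε) ≤ 0

variable {M : Market I J} {r p : J → ℝ} {ε : ℝ} {μ : I → Option J}

lemma price_le (h : AuctionState M r ε p μ) {B : ℝ} (hr : ∀ j, r j ≤ B)
    (hu : ∀ i j, M.u i j B ≤ 0) (j : J) : p j ≤ B := by
  by_cases hj : ∀ i, μ i ≠ some j
  · exact (h.unsold j hj).trans_le (hr j)
  · push Not at hj
    obtain ⟨i, hi⟩ := hj
    exact (M.anti i j).le_iff_ge.1 ((hu i j).trans (h.nonneg i j hi))

lemma exists_raise (h : AuctionState M r ε p μ) (hε : 0 < ε) (hT : ¬ Terminal M ε p μ) :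
    ∃ p' μ', AuctionState M r ε p' μ' ∧ ∑ j, p' j = ∑ j, p j + ε := by
  unfold Terminal at hT
  push Not at hT
  obtain ⟨i, hi, j₁, hj₁⟩ := hT
  have : Nonempty J := ⟨j₁⟩
  obtain ⟨j, hj⟩ := Finite.exists_max fun j => M.u i j (p j + ε)
  have hle : ∀ l, p l ≤ Function.update p j (p j + ε) l := fun l => by
    by_cases hl : l = j
    · subst hl; simp [hε.le]
    · simp [hl]
  have hμ : ∀ a l, (if a = i then some j else if μ a = some j then none else μ a) = some l →
      (a = i ∧ l = j) ∨ (a ≠ i ∧ l ≠ j ∧ μ a = some l) := by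
    intro a l hal
    split_ifs at hal with h1 h2
    · exact Or.inl ⟨h1, (Option.some.inj hal).symm⟩
    · exact Or.inr ⟨h1, fun hl => h2 (hl ▸ hal), hal⟩
  refine ⟨Function.update p j (p j + ε),
    fun a => if a = i then some j else if μ a = some j then none else μ a, ?_, ?_⟩
  · refine ⟨?_, fun l => (h.reserve_le l).trans (hle l), ?_, ?_, ?_⟩
    · intro a b l ha hb
      rcases hμ a l ha with ⟨rfl, h1⟩ | ⟨-, h1, h2⟩ <;>
        rcases hμ b l hb with ⟨rfl, h3⟩ | ⟨-, h3, h4⟩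
      · rfl
      · exact absurd h1 h3
      · exact absurd h3 h1
      · exact h.inj a b l h2 h4
    · intro a l ha
      rcases hμ a l ha with ⟨rfl, rfl⟩ | ⟨-, h1, h2⟩
      · simpa using hj₁.le.trans (hj j₁)
      · simpa [h1] using h.nonneg a l h2
    · intro a l ha l'
      have hl' := (M.anti a l').antitone (add_le_add_left (hle l') ε)
      rcases hμ a l ha with ⟨rfl, rfl⟩ | ⟨-, h1, h2⟩
      · simpa using hl'.trans (hj l')
      · simpa [h1] using hl'.trans (h.almost_best a l h2 l')
    · intro l hl
      have hlj : l ≠ j := fun hlj => hl i (by simp [hlj])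
      rw [Function.update_of_ne hlj]
      refine h.unsold l fun a ha => hl a ?_
      have hai : a ≠ i := by rintro rfl; simp [hi] at ha
      simp [hai, ha, hlj]
  · rw [Finset.sum_update_of_mem (Finset.mem_univ j),
      ← Finset.add_sum_erase _ p (Finset.mem_univ j), Finset.sdiff_singleton_eq_erase]
    ring

lemma exists_terminal (M : Market I J) {r : J → ℝ} {B : ℝ} (hr : ∀ j, r j ≤ B)
    (hu : ∀ i j, M.u i j B ≤ 0) {ε : ℝ} (hε : 0 < ε) :
    ∃ p μ, AuctionState M r ε p μ ∧ Terminal M ε p μ := by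
  by_contra! hcon
  have key : ∀ n : ℕ, ∃ p μ, AuctionState M r ε p μ ∧ ∑ j, p j = ∑ j, r j + n * ε := by
    intro n
    induction n with
    | zero => exact ⟨r, fun _ => none, ⟨by simp, by simp, by simp, by simp, by simp⟩, by simp⟩
    | succ n ih =>
      obtain ⟨p, μ, h, hs⟩ := ih
      obtain ⟨p', μ', h', hs'⟩ := h.exists_raise hε (hcon p μ h)
      exact ⟨p', μ', h', by rw [hs', hs]; push_cast; ring⟩
  obtain ⟨n, hn⟩ := exists_nat_gt ((∑ _j : J, B - ∑ j, r j) / ε)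
  obtain ⟨p, μ, h, hs⟩ := key n
  have hB : ∑ j, p j ≤ ∑ _j : J, B := Finset.sum_le_sum fun j _ => h.price_le hr hu j
  rw [div_lt_iff₀ hε] at hn
  linarith

end AuctionState

/-- Every market has a competitive equilibrium relative to given reserve prices. -/
lemma Market.exists_equilib_reserve (M : Market I J) (r : J → ℝ) :
    ∃ (p : J → ℝ) (w : I → ℝ) (μ : I → Option J),
      (∀ i i' j, μ i = some j → μ i' = some j → i = i') ∧
      (∀ j, r j ≤ p j) ∧ (∀ i, 0 ≤ w i) ∧
      (∀ i j, μ i = some j → w i = M.u i j (p j)) ∧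
      (∀ i j, M.u i j (p j) ≤ w i) ∧
      (∀ i, μ i = none → w i = 0) ∧
      (∀ j, (∀ i, μ i ≠ some j) → p j = r j) := by
  choose x hx using M.evNonpos
  obtain ⟨B₁, hB₁⟩ := (Set.finite_range r).bddAbove
  obtain ⟨B₂, hB₂⟩ := (Set.finite_range fun a : I × J => x a.1 a.2).bddAbove
  have hr : ∀ j, r j ≤ max B₁ B₂ := fun j => (hB₁ ⟨j, rfl⟩).trans (le_max_left _ _)
  have hu : ∀ i j, M.u i j (max B₁ B₂) ≤ 0 := fun i j =>
    hx i j _ ((hB₂ ⟨(i, j), rfl⟩).trans (le_max_right _ _))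
  have hex : ∀ ε : ℝ, ∃ p μ, 0 < ε → AuctionState M r ε p μ ∧ AuctionState.Terminal M ε p μ := by
    intro ε
    by_cases hε : 0 < ε
    · obtain ⟨p, μ, h⟩ := AuctionState.exists_terminal M hr hu hε
      exact ⟨p, μ, fun _ => h⟩
    · exact ⟨r, fun _ => none, fun h => absurd h hε⟩
  choose P m hPm using hex
  let U : Ultrafilter ℝ := Ultrafilter.of (nhdsWithin 0 (Set.Ioi 0))
  have hU : (U : Filter ℝ) ≤ nhdsWithin 0 (Set.Ioi 0) := Ultrafilter.of_le _
  have hpos : ∀ᶠ ε in (U : Filter ℝ), 0 < ε := hU self_mem_nhdsWithin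
  have hzero : Filter.Tendsto id (U : Filter ℝ) (nhds 0) := hU.trans nhdsWithin_le_nhds
  have hbox : ∀ᶠ ε in (U : Filter ℝ), P ε ∈ Set.Icc r fun _ => max B₁ B₂ := by
    filter_upwards [hpos] with ε hε
    exact ⟨(hPm ε hε).1.reserve_le, (hPm ε hε).1.price_le hr hu⟩
  obtain ⟨p, hp, hlim⟩ := isCompact_Icc.ultrafilter_le_nhds (U.map P)
    (Filter.le_principal_iff.2 hbox)
  obtain ⟨μ, hμ⟩ := Ultrafilter.eq_pure_of_finite (U.map m)
  have hm : ∀ᶠ ε in (U : Filter ℝ), m ε = μ := by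
    have : {μ} ∈ U.map m := by rw [hμ]; exact Set.mem_singleton μ
    exact this
  have hgood : ∀ᶠ ε in (U : Filter ℝ),
      AuctionState M r ε (P ε) μ ∧ AuctionState.Terminal M ε (P ε) μ := by
    filter_upwards [hpos, hm] with ε hε hmε
    exact hmε ▸ hPm ε hε
  have hPj : ∀ j, Filter.Tendsto (fun ε => P ε j) (U : Filter ℝ) (nhds (p j)) :=
    fun j => (tendsto_pi_nhds.1 (show Filter.Tendsto P (U : Filter ℝ) (nhds p) from hlim)) j
  have hPu : ∀ i j, Filter.Tendsto (fun ε => M.u i j (P ε j)) (U : Filter ℝ)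
      (nhds (M.u i j (p j))) := fun i j => ((M.cont i j).tendsto _).comp (hPj j)
  have hPε : ∀ i j, Filter.Tendsto (fun ε => M.u i j (P ε j + ε)) (U : Filter ℝ)
      (nhds (M.u i j (p j))) := fun i j => by
    have := (hPj j).add hzero
    rw [add_zero] at this
    exact ((M.cont i j).tendsto _).comp this
  obtain ⟨ε₀, h₀, -⟩ := hgood.exists
  refine ⟨p, fun i => (μ i).elim 0 fun j => M.u i j (p j), μ, h₀.inj, hp.1, ?_, ?_, ?_, ?_, ?_⟩
  · intro i
    rcases hi : μ i with _ | j <;> simp only [hi, Option.elim_none, Option.elim_some]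
    · exact le_rfl
    · exact ge_of_tendsto (hPu i j) (hgood.mono fun ε h => h.1.nonneg i j hi)
  · intro i j hi
    simp [hi]
  · intro i j'
    rcases hi : μ i with _ | j <;> simp only [hi, Option.elim_none, Option.elim_some]
    · exact le_of_tendsto (hPε i j') (hgood.mono fun ε h => h.2 i hi j')
    · exact le_of_tendsto_of_tendsto (hPε i j') (hPu i j)
        (hgood.mono fun ε h => h.1.almost_best i j hi j')
  · intro i hi
    simp [hi]
  · intro j hj
    exact tendsto_nhds_unique (hPj j)
      (tendsto_const_nhds.congr' (hgood.mono fun ε h => (h.1.unsold j hj).symm))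

end Existence

section InducedPrice

variable {I J : Type} [Fintype I] [Fintype J] (M : Market I J)

lemma inducedPrice_nonneg (w : I → ℝ) (j : J) : 0 ≤ inducedPrice M w j :=
  Finset.le_max' _ _ (Finset.mem_insert_self _ _)

lemma Market.u_le_of_inducedPrice_le {w : I → ℝ} {j : J} {x : ℝ} (hx : inducedPrice M w j ≤ x)
    (i : I) : M.u i j x ≤ w i := by
  have h : Function.invFun (M.u i j) (w i) ≤ inducedPrice M w j :=
    Finset.le_max' _ _ (Finset.mem_insert_of_mem
      (Finset.mem_image_of_mem (fun i => Function.invFun (M.u i j) (w i)) (Finset.mem_univ i)))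
  exact ((M.anti i j).antitone (h.trans hx)).trans_eq (Function.invFun_eq (M.surj i j (w i)))

lemma Market.u_lt_of_inducedPrice_lt {w : I → ℝ} {j : J} {x : ℝ} (hx : inducedPrice M w j < x)
    (i : I) : M.u i j x < w i :=
  (M.anti i j hx).trans_le (M.u_le_of_inducedPrice_le le_rfl i)

lemma Market.exists_lt_u_of_lt_inducedPrice {w : I → ℝ} {j : J} {x : ℝ} (h0 : 0 ≤ x)
    (hx : x < inducedPrice M w j) : ∃ i, w i < M.u i j x := by
  have hmem := Finset.max'_mem (insert (0 : ℝ)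
    (Finset.univ.image fun i => Function.invFun (M.u i j) (w i))) (Finset.insert_nonempty _ _)
  rcases Finset.mem_insert.1 hmem with h | h
  · exact absurd (hx.trans_eq h) h0.not_gt
  · obtain ⟨i, -, hi⟩ := Finset.mem_image.1 h
    refine ⟨i, ?_⟩
    have hlt := M.anti i j (hx.trans_eq hi.symm)
    rwa [Function.invFun_eq (M.surj i j (w i))] at hlt

end InducedPrice

section RemoveGood

variable {I J : Type} [Fintype I] [Fintype J] [DecidableEq J] {M : Market I J} {j0 : J}
  {p : J → ℝ} {w : I → ℝ} {μ : I → Option J}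
  {pg : {j : J // j ≠ j0} → ℝ} {wg : I → ℝ} {μg : I → Option {j : J // j ≠ j0}}

/-- An equilibrium price of `j0` is at most the price induced by any equilibrium without `j0`. -/
lemma IsEquilib.price_le_inducedPrice (h : IsEquilib M p w μ)
    (hg : IsEquilib (M.removeGood j0) pg wg μg) : p j0 ≤ inducedPrice M wg j0 := by
  obtain ⟨-, hp, hw, hmatch, hbest, -, hunsold⟩ := h
  obtain ⟨ginj, gp, -, gmatch, gbest, gnone, -⟩ := hg
  by_contra! hlt
  let A : Type := {j : J // ∀ h : j ≠ j0, pg ⟨j, h⟩ < p j}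
  let B : Type := {i : I // w i < wg i}
  have howner : ∀ j : A, ∃ i : B, μ i.1 = some j.1 := by
    rintro ⟨j, hj⟩
    have hpos : 0 < p j := by
      by_cases hj0 : j = j0
      · exact hj0 ▸ (inducedPrice_nonneg M wg j0).trans_lt hlt
      · exact (gp _).trans_lt (hj hj0)
    have hsold : ∃ i, μ i = some j := by
      by_contra! hno
      exact hpos.ne' (hunsold j hno)
    obtain ⟨i, hi⟩ := hsold
    refine ⟨⟨i, ?_⟩, hi⟩
    rw [hmatch i j hi]
    by_cases hj0 : j = j0
    · subst hj0
      exact M.u_lt_of_inducedPrice_lt hlt i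
    · exact (M.anti i j (hj hj0)).trans_le (gbest i ⟨j, hj0⟩)
  have hgood : ∀ i : B, ∃ j : A, ∃ h : j.1 ≠ j0, μg i.1 = some ⟨j.1, h⟩ := by
    rintro ⟨i, hi⟩
    cases hg : μg i with
    | none => exact absurd (hi.trans_eq (gnone i hg)) (hw i).not_gt
    | some j =>
      refine ⟨⟨j.1, fun _ => ?_⟩, j.2, rfl⟩
      have hlt' := (hbest i j.1).trans_lt (hi.trans_eq (gmatch i j hg))
      exact (M.anti i j.1).lt_iff_gt.1 hlt'
  choose f hf using howner
  choose g hne hg using hgood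
  have finj : Function.Injective f := fun a b hab => by
    have := hf a
    rw [hab, hf b] at this
    exact Subtype.ext (Option.some.inj this).symm
  have ginj' : Function.Injective g := fun a b hab => by
    refine Subtype.ext (ginj a.1 b.1 _ (hg a) ?_)
    rw [hg b]
    simp [hab]
  have : Finite A := Subtype.finite
  obtain ⟨a, ha⟩ := Finite.injective_iff_surjective.1 (ginj'.comp finj)
    ⟨j0, fun h => absurd rfl h⟩
  exact hne (f a) (congrArg Subtype.val ha)

/-- Any nonnegative price of `j0` below the price induced by the lowest equilibrium without `j0`
is exceeded in some equilibrium. -/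
lemma IsLowest.exists_isEquilib_le_price (hlow : IsLowest (M.removeGood j0) pg wg μg) {x : ℝ}
    (hx0 : 0 ≤ x) (hx : x < inducedPrice M wg j0) :
    ∃ p w μ, IsEquilib M p w μ ∧ x ≤ p j0 := by
  obtain ⟨p, w, μ, hinj, hr, hw, hmatch, hbest, hnone, hunsold⟩ :=
    M.exists_equilib_reserve (Function.update 0 j0 x)
  have hxp : x ≤ p j0 := by simpa using hr j0
  have hp : ∀ j, 0 ≤ p j := fun j => by
    by_cases hj : j = j0
    · exact hj ▸ hx0.trans hxp
    · simpa [hj] using hr j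
  have hunsold' : ∀ j, j ≠ j0 → (∀ i, μ i ≠ some j) → p j = 0 := fun j hj h => by
    simpa [hj] using hunsold j h
  refine ⟨p, w, μ, ⟨hinj, hp, hw, hmatch, hbest, hnone, fun j hj => ?_⟩, hxp⟩
  by_cases hj0 : j = j0
  swap
  · exact hunsold' j hj0 hj
  subst hj0
  exfalso
  have hpx : p j = x := by simpa using hunsold j hj
  let μ' : I → Option {l : J // l ≠ j} := fun i =>
    (μ i).bind fun l => if h : l ≠ j then some ⟨l, h⟩ else none
  have hμ' : ∀ i l, μ' i = some l ↔ μ i = some l.1 := by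
    rintro i ⟨l, hl⟩
    cases hi : μ i with
    | none => simp [μ', hi]
    | some k =>
      have hk : k ≠ j := by rintro rfl; exact hj i hi
      simp [μ', hi, hk]
  have heq : IsEquilib (M.removeGood j) (fun l => p l.1) w μ' := by
    refine ⟨fun i i' l h h' => hinj i i' l.1 ((hμ' i l).1 h) ((hμ' i' l).1 h'),
      fun l => hp l.1, hw, fun i l h => hmatch i l.1 ((hμ' i l).1 h), fun i l => hbest i l.1,
      fun i h => hnone i ?_, fun l h => hunsold' l.1 l.2 fun i hi => h i ((hμ' i l).2 hi)⟩
    cases hi : μ i with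
    | none => rfl
    | some k =>
      have hk : k ≠ j := by rintro rfl; exact hj i hi
      simpa [h] using (hμ' i ⟨k, hk⟩).2 hi
  obtain ⟨i, hi⟩ := M.exists_lt_u_of_lt_inducedPrice hx0 hx
  have hlt : wg i < w i := hi.trans_le (hpx ▸ hbest i j)
  cases hμi : μ i with
  | none => exact absurd (hlt.trans_eq (hnone i hμi)) (hlow.1.2.2.1 i).not_gt
  | some k =>
    have hk : k ≠ j := by rintro rfl; exact hj i hμi
    have h1 : M.u i k (p k) ≤ M.u i k (pg ⟨k, hk⟩) :=
      (M.anti i k).antitone (hlow.2 _ _ _ heq ⟨k, hk⟩)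
    have h2 : M.u i k (pg ⟨k, hk⟩) ≤ wg i := hlow.1.2.2.2.2.1 i ⟨k, hk⟩
    exact absurd (h1.trans h2) (by rw [← hmatch i k hμi]; exact hlt.not_ge)

end RemoveGood

/-- Inductive characterization of the highest-equilibrium price: the price of
good `j0` at the highest equilibrium of `M` equals the price induced on `j0`
by the payoffs at the lowest equilibrium of `M` without good `j0`. -/
theorem highest_price_inductive {I J : Type} [Fintype I] [Fintype J] [DecidableEq J]
    (M : Market I J) (j0 : J)
    (p : J → ℝ) (w : I → ℝ) (μ : I → Option J) (hhigh : IsHighest M p w μ)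
    (pg : {j : J // j ≠ j0} → ℝ) (wg : I → ℝ) (μg : I → Option {j : J // j ≠ j0})
    (hlow : IsLowest (M.removeGood j0) pg wg μg) :
    p j0 = inducedPrice M wg j0 := by
  refine le_antisymm (hhigh.1.price_le_inducedPrice hlow.1) (le_of_forall_lt fun x hx => ?_)
  obtain ⟨y, hxy, hy⟩ := exists_between hx
  by_cases hy0 : 0 ≤ y
  · obtain ⟨p', w', μ', heq, hle⟩ := hlow.exists_isEquilib_le_price hy0 hy
    exact hxy.trans_le (hle.trans (hhigh.2 p' w' μ' heq j0))
  · exact (hxy.trans (not_le.1 hy0)).trans_le (hhigh.1.2.1 j0)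
end
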